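/- arXiv:1804.07213 — 4 statements merged into one kernel-verified Lean document; each statement's English description precedes it below -/
import Mathlib

section
/- Let h(x) = Q₁(x) − Q₂(Ax), where Q₁: ℝⁿ → ℝ ∪ {∞} is proper and closed, Q₂: ℝᵐ → ℝ is convex with ∇Q₂ globally Lipschitz continuous, and A: ℝⁿ → ℝᵐ is linear. Suppose h satisfies the KL property at x̄ ∈ dom ∂h with exponent 1/2. Then the function H(x, y) = Q₁(x) − ⟨Ax, y⟩ + Q₂*(y) satisfies the KL property at (x̄, ∇Q₂(Ax̄)) ∈ dom ∂H with exponent 1/2. -/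
/-!
The majorant satisfies `H(x, y) ≥ h(x)` by Fenchel–Young, with equality at `y = ∇Q₂(Ax)`. Hence
Fréchet subgradients `v` of `h` at `x` lift to `(v, 0)` at `(x, ∇Q₂(Ax))`
(`frechet_HFun_of_hFun`), and passing to limits shows that `∂H` is nonempty at `(x̄, ∇Q₂(Ax̄))`.

For the exponent, let `w = (w₁, w₂)` be a Fréchet subgradient of `H` at `(x, y)` with `H(x, y)`
finite. The `y`-slice of `H` is convex, so with `u = Ax + w₂` its subgradient inequality forces
`y = ∇Q₂(u)` and `Q₂*(y) = ⟨u, y⟩ - Q₂(u)`. Thus `‖y - ∇Q₂(Ax)‖ ≤ ℓ ‖w₂‖` and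
`H(x, y) - h(x) ≤ ℓ ‖w₂‖²`. The `x`-slice gives the subgradient
`v = w₁ + Aᵀ(y - ∇Q₂(Ax))` of `h` at `x`, of norm at most `(1 + ‖Aᵀ‖ ℓ) ‖w‖`
(`frechet_HFun_bounds`). Exponent `1/2` for `h` says `h(x) - h(x̄) ≤ (c / 2)² ‖v‖²` when the left
side is positive, so `H(x, y) - H(x̄, ȳ) ≤ C ‖w‖²`. This estimate is stable under limits and so
extends from Fréchet to limiting subgradients.
-/

open Filter Topology Set Metric Bornology
open scoped RealInnerProductSpace

noncomputable section

abbrev Eucl (n : ℕ) := EuclideanSpace ℝ (Fin n)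

variable {H : Type*} [NormedAddCommGroup H] [InnerProductSpace ℝ H]

/-- Fréchet (regular) subgradient of an extended-real-valued function. -/
def FrechetSubgradAt (h : H → EReal) (v x : H) : Prop :=
  ∀ ε : ℝ, 0 < ε →
    ∀ᶠ y in 𝓝[≠] x, h x + ((⟪v, y - x⟫ - ε * ‖y - x‖ : ℝ) : EReal) ≤ h y

/-- Limiting (Mordukhovich) subdifferential. -/
def limSubdiff (h : H → EReal) (x : H) : Set H :=
  {v | ∃ xs vs : ℕ → H,
    Tendsto xs atTop (𝓝 x) ∧
    Tendsto (fun k => h (xs k)) atTop (𝓝 (h x)) ∧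
    Tendsto vs atTop (𝓝 v) ∧
    ∀ k, FrechetSubgradAt h (vs k) (xs k)}

/-- Convex subgradient of a real-valued function. -/
def ConvexSubgradAt (g : H → ℝ) (v x : H) : Prop :=
  ∀ y, g x + ⟪v, y - x⟫ ≤ g y

/-- Convex subgradient of an extended-real-valued function. -/
def ConvexSubgradAtE (g : H → EReal) (v x : H) : Prop :=
  ∀ y, g x + ((⟪v, y - x⟫ : ℝ) : EReal) ≤ g y

/-- Convex conjugate of a real-valued function. -/
def conjE (g : H → ℝ) (y : H) : EReal :=
  ⨆ x : H, ((⟪x, y⟫ - g x : ℝ) : EReal)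

/-- `P` is proper, closed (lsc) and convex. -/
def ProperClosedConvexE (P : H → EReal) : Prop :=
  (∀ x, P x ≠ ⊥) ∧ (∃ x, P x ≠ ⊤) ∧ LowerSemicontinuous P ∧
  (∀ x y : H, ∀ t : ℝ, t ∈ Ioo (0:ℝ) 1 →
    P (t • x + (1 - t) • y) ≤ (t : EReal) * P x + ((1 - t : ℝ) : EReal) * P y)

/-- KL property with exponent `α` at a point. -/
def KLExpAt (h : H → EReal) (α : ℝ) (x₀ : H) : Prop :=
  ∃ c > (0:ℝ), ∃ ε > (0:ℝ), ∃ a > (0:ℝ), ∀ x : H,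
    ‖x - x₀‖ ≤ ε → h x₀ < h x → h x < h x₀ + (a : EReal) →
    (limSubdiff h x).Nonempty →
    1 ≤ c * (1 - α) * ((h x).toReal - (h x₀).toReal) ^ (-α) * infDist 0 (limSubdiff h x)

/-- KL function with exponent `α`. -/
def IsKLWithExp (h : H → EReal) (α : ℝ) : Prop :=
  ∀ x₀ : H, (limSubdiff h x₀).Nonempty → KLExpAt h α x₀

/-- KL property (general desingularizing function) at a point. -/
def KLAt (h : H → EReal) (x₀ : H) : Prop :=
  ∃ a > (0:ℝ), ∃ U ∈ 𝓝 x₀, ∃ φ φd : ℝ → ℝ,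
    ContinuousOn φ (Ico 0 a) ∧ ConcaveOn ℝ (Ico 0 a) φ ∧ φ 0 = 0 ∧
    (∀ s ∈ Ico (0:ℝ) a, 0 ≤ φ s) ∧
    (∀ s ∈ Ioo (0:ℝ) a, HasDerivAt φ (φd s) s ∧ 0 < φd s) ∧
    ∀ x ∈ U, h x₀ < h x → h x < h x₀ + (a : EReal) → (limSubdiff h x).Nonempty →
      1 ≤ φd ((h x).toReal - (h x₀).toReal) * infDist 0 (limSubdiff h x)

/-- KL function. -/
def IsKLFun (h : H → EReal) : Prop :=
  ∀ x₀ : H, (limSubdiff h x₀).Nonempty → KLAt h x₀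

/-- The potential function `E(x,y,w) = f(x) + P₁(x) - ⟨x,y⟩ + P₂*(y) + L/2 ‖x-w‖²`. -/
def potE (f : H → ℝ) (P₁ : H → EReal) (P₂ : H → ℝ) (L : ℝ) (x y w : H) : EReal :=
  ((f x : ℝ) : EReal) + P₁ x - ((⟪x, y⟫ : ℝ) : EReal) + conjE P₂ y
    + ((L / 2 * ‖x - w‖ ^ 2 : ℝ) : EReal)

/-- The pDCAe iteration: `ξ^{k+1} ∈ ∂P₂(x^k)`, `u^k = x^k + β_k (x^k - x^{k-1})` and
`x^{k+1}` is the minimizer of `⟨∇f(u^k) - ξ^{k+1}, ·⟩ + L/2 ‖· - u^k‖² + P₁(·)`.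
(`x⁻¹ = x⁰` is encoded by truncated subtraction in `ℕ`.) -/
def IsPDCAe (f' : H → H) (P₁ : H → EReal) (P₂ : H → ℝ) (L : ℝ) (β : ℕ → ℝ)
    (x ξ : ℕ → H) : Prop :=
  P₁ (x 0) ≠ ⊤ ∧
  (∀ k : ℕ, ConvexSubgradAt P₂ (ξ (k + 1)) (x k)) ∧
  (∀ k : ℕ, ∀ z : H,
    ((⟪f' (x k + β k • (x k - x (k - 1))) - ξ (k + 1), x (k + 1)⟫
        + L / 2 * ‖x (k + 1) - (x k + β k • (x k - x (k - 1)))‖ ^ 2 : ℝ) : EReal)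
      + P₁ (x (k + 1))
      ≤ ((⟪f' (x k + β k • (x k - x (k - 1))) - ξ (k + 1), z⟫
        + L / 2 * ‖z - (x k + β k • (x k - x (k - 1)))‖ ^ 2 : ℝ) : EReal) + P₁ z)

/-- Triples `(x, y, w)` with the ℓ² product inner product structure. -/
abbrev Trip (n : ℕ) := WithLp 2 (Eucl n × WithLp 2 (Eucl n × Eucl n))

def mkTrip {n : ℕ} (a b c : Eucl n) : Trip n :=
  (WithLp.equiv 2 _).symm (a, (WithLp.equiv 2 _).symm (b, c))

/-- `potE` as a function on triples. -/
def potE3 {n : ℕ} (f : Eucl n → ℝ) (P₁ : Eucl n → EReal) (P₂ : Eucl n → ℝ) (L : ℝ)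
    (p : Trip n) : EReal :=
  potE f P₁ P₂ L ((WithLp.equiv 2 _) p).1 ((WithLp.equiv 2 _) ((WithLp.equiv 2 _) p).2).1
    ((WithLp.equiv 2 _) ((WithLp.equiv 2 _) p).2).2

/-- Pairs `(x, y)` with the ℓ² product inner product structure. -/
abbrev Pr (n m : ℕ) := WithLp 2 (Eucl n × Eucl m)

def mkPr {n m : ℕ} (a : Eucl n) (b : Eucl m) : Pr n m :=
  (WithLp.equiv 2 _).symm (a, b)

/-- `h(x) = Q₁(x) - Q₂(A x)`. -/
def hFun {n m : ℕ} (Q₁ : Eucl n → EReal) (Q₂ : Eucl m → ℝ)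
    (A : Eucl n →ₗ[ℝ] Eucl m) (x : Eucl n) : EReal :=
  Q₁ x - ((Q₂ (A x) : ℝ) : EReal)

/-- `H(x, y) = Q₁(x) - ⟨A x, y⟩ + Q₂*(y)`. -/
def HFun {n m : ℕ} (Q₁ : Eucl n → EReal) (Q₂ : Eucl m → ℝ)
    (A : Eucl n →ₗ[ℝ] Eucl m) (p : Pr n m) : EReal :=
  Q₁ ((WithLp.equiv 2 _) p).1
    - ((⟪A ((WithLp.equiv 2 _) p).1, ((WithLp.equiv 2 _) p).2⟫ : ℝ) : EReal)
    + conjE Q₂ ((WithLp.equiv 2 _) p).2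

section Helpers

variable {n m : ℕ}

/-! ### Convexity of `Q₂` and its conjugate -/

/-- First-order characterisation of convexity, from the one-dimensional restriction to a line. -/
lemma gradient_ineq {Q : Eucl m → ℝ} {q : Eucl m → Eucl m} (hc : ConvexOn ℝ Set.univ Q)
    (hg : ∀ u, HasGradientAt Q (q u) u) (u z : Eucl m) : Q u + ⟪q u, z - u⟫ ≤ Q z := by
  have hconv : ConvexOn ℝ Set.univ (fun t : ℝ => Q (AffineMap.lineMap u z t)) := by
    have := hc.comp_affineMap (AffineMap.lineMap u z : ℝ →ᵃ[ℝ] Eucl m)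
    simpa [Function.comp_def] using this
  have hline : HasDerivAt (fun t : ℝ => (AffineMap.lineMap u z t : Eucl m)) (z - u) 0 :=
    AffineMap.hasDerivAt_lineMap
  have hder : HasDerivAt (fun t : ℝ => Q (AffineMap.lineMap u z t)) ⟪q u, z - u⟫ 0 := by
    have h1 := (hg (AffineMap.lineMap u z (0 : ℝ))).hasFDerivAt.comp_hasDerivAt (0 : ℝ) hline
    simpa [Function.comp_def] using h1
  have := hconv.le_slope_of_hasDerivAt (mem_univ 0) (mem_univ 1) one_pos hder
  simp [slope_def_field] at this
  linarith

lemma conjE_le_iff {Q : Eucl m → ℝ} {y : Eucl m} {c : ℝ} :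
    conjE Q y ≤ (c : EReal) ↔ ∀ z, ⟪z, y⟫ - Q z ≤ c := by
  simp only [conjE, iSup_le_iff, EReal.coe_le_coe_iff]

lemma le_conjE (Q : Eucl m → ℝ) (y z : Eucl m) :
    ((⟪z, y⟫ - Q z : ℝ) : EReal) ≤ conjE Q y :=
  le_iSup (fun z : Eucl m => ((⟪z, y⟫ - Q z : ℝ) : EReal)) z

lemma conjE_ne_bot (Q : Eucl m → ℝ) (y : Eucl m) : conjE Q y ≠ ⊥ := by
  intro h
  have := le_conjE Q y 0
  rw [h, le_bot_iff] at this
  exact EReal.coe_ne_bot _ this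

/-- Equality in the Fenchel–Young inequality at a gradient. -/
lemma conjE_gradient {Q : Eucl m → ℝ} {q : Eucl m → Eucl m} (hc : ConvexOn ℝ Set.univ Q)
    (hg : ∀ u, HasGradientAt Q (q u) u) (u : Eucl m) :
    conjE Q (q u) = ((⟪u, q u⟫ - Q u : ℝ) : EReal) := by
  refine le_antisymm (conjE_le_iff.2 fun z => ?_) (le_conjE Q _ u)
  have := gradient_ineq hc hg u z
  rw [inner_sub_right, real_inner_comm z, real_inner_comm u] at this
  linarith

/-- If `u` attains the supremum that defines the conjugate at `y`, then `y` is the gradient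
at `u`. -/
lemma eq_gradient_of_conjE_le {Q : Eucl m → ℝ} {q : Eucl m → Eucl m}
    (hg : ∀ u, HasGradientAt Q (q u) u) {u y : Eucl m}
    (h : conjE Q y ≤ ((⟪u, y⟫ - Q u : ℝ) : EReal)) : y = q u := by
  have hmax : IsLocalMax (fun z : Eucl m => ⟪y, z⟫ - Q z) u := by
    refine Eventually.of_forall fun z => ?_
    have := conjE_le_iff.1 h z
    simpa only [real_inner_comm] using this
  have hd : HasFDerivAt (fun z : Eucl m => ⟪y, z⟫ - Q z)
      (innerSL ℝ y - innerSL ℝ (q u)) u :=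
    ((innerSL ℝ y).hasFDerivAt).sub (hg u).hasFDerivAt
  have h0 := hmax.hasFDerivAt_eq_zero hd
  have h1 : innerSL ℝ (y - q u) (y - q u) = 0 := by
    rw [(innerSL ℝ).map_sub, h0]; rfl
  rw [innerSL_apply_apply, inner_self_eq_zero] at h1
  exact sub_eq_zero.1 h1

lemma toReal_lt_of_lt {x y : EReal} (h : x < y) (hx : x ≠ ⊥) (hy : y ≠ ⊤) :
    x.toReal < y.toReal := by
  lift x to ℝ using ⟨h.ne_top, hx⟩
  lift y to ℝ using ⟨hy, h.ne_bot⟩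
  exact_mod_cast h

/-! ### Comparison of `h` and its majorant -/

lemma HFun_mkPr (Q₁ : Eucl n → EReal) (Q₂ : Eucl m → ℝ) (A : Eucl n →ₗ[ℝ] Eucl m)
    (x : Eucl n) (y : Eucl m) :
    HFun Q₁ Q₂ A (mkPr x y) = Q₁ x - ((⟪A x, y⟫ : ℝ) : EReal) + conjE Q₂ y := rfl

lemma hFun_le_HFun (Q₁ : Eucl n → EReal) (Q₂ : Eucl m → ℝ) (A : Eucl n →ₗ[ℝ] Eucl m)
    (p : Pr n m) : hFun Q₁ Q₂ A p.fst ≤ HFun Q₁ Q₂ A p := by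
  change Q₁ p.fst - ((Q₂ (A p.fst) : ℝ) : EReal)
    ≤ Q₁ p.fst - ((⟪A p.fst, p.snd⟫ : ℝ) : EReal) + conjE Q₂ p.snd
  calc Q₁ p.fst - ((Q₂ (A p.fst) : ℝ) : EReal)
      = Q₁ p.fst - ((⟪A p.fst, p.snd⟫ : ℝ) : EReal)
          + ((⟪A p.fst, p.snd⟫ - Q₂ (A p.fst) : ℝ) : EReal) := by
        rw [sub_eq_add_neg, sub_eq_add_neg, add_assoc, ← EReal.coe_neg, ← EReal.coe_neg,
          ← EReal.coe_add]
        congr 2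
        ring
    _ ≤ _ := by gcongr; exact le_conjE Q₂ _ _

lemma HFun_gradient (Q₁ : Eucl n → EReal) {Q₂ : Eucl m → ℝ} {q : Eucl m → Eucl m}
    (A : Eucl n →ₗ[ℝ] Eucl m) (hc : ConvexOn ℝ Set.univ Q₂)
    (hg : ∀ u, HasGradientAt Q₂ (q u) u) (x : Eucl n) :
    HFun Q₁ Q₂ A (mkPr x (q (A x))) = hFun Q₁ Q₂ A x := by
  rw [HFun_mkPr, conjE_gradient hc hg, hFun, sub_eq_add_neg (Q₁ x), sub_eq_add_neg (Q₁ x),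
    add_assoc, ← EReal.coe_neg, ← EReal.coe_neg, ← EReal.coe_add]
  congr 2
  ring

lemma hFun_ne_bot {Q₁ : Eucl n → EReal} (hbot : ∀ x, Q₁ x ≠ ⊥) (Q₂ : Eucl m → ℝ)
    (A : Eucl n →ₗ[ℝ] Eucl m) (x : Eucl n) : hFun Q₁ Q₂ A x ≠ ⊥ := by
  rw [hFun, sub_eq_add_neg, ← EReal.coe_neg]
  simp [EReal.add_eq_bot_iff, hbot x]

/-! ### Fréchet subgradients -/

lemma FrechetSubgradAt.mem_limSubdiff {E : Type*} [NormedAddCommGroup E] [InnerProductSpace ℝ E]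
    {f : E → EReal} {v x : E} (h : FrechetSubgradAt f v x) : v ∈ limSubdiff f x :=
  ⟨fun _ => x, fun _ => v, tendsto_const_nhds, tendsto_const_nhds, tendsto_const_nhds, fun _ => h⟩

/-- Since `H` majorizes `h` and agrees with it at `(x, ∇Q₂(Ax))`, a subgradient `v` of `h` at `x`
gives the subgradient `(v, 0)` of `H` there. -/
lemma frechet_HFun_of_hFun {Q₁ : Eucl n → EReal} {Q₂ : Eucl m → ℝ} {q : Eucl m → Eucl m}
    {A : Eucl n →ₗ[ℝ] Eucl m} (hc : ConvexOn ℝ Set.univ Q₂)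
    (hg : ∀ u, HasGradientAt Q₂ (q u) u) {x v : Eucl n}
    (h : FrechetSubgradAt (hFun Q₁ Q₂ A) v x) :
    FrechetSubgradAt (HFun Q₁ Q₂ A) (mkPr v 0) (mkPr x (q (A x))) := by
  intro ε hε
  have h1 := eventually_nhdsWithin_iff.1 (h ε hε)
  have hcont : Tendsto (fun p : Pr n m => p.fst) (𝓝 (mkPr x (q (A x)))) (𝓝 x) :=
    (WithLp.continuous_fst 2 _ _).tendsto (mkPr x (q (A x)))
  refine ((hcont.eventually h1).filter_mono nhdsWithin_le_nhds).mono fun p hp => ?_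
  have hp' : hFun Q₁ Q₂ A x + ((⟪v, p.fst - x⟫ - ε * ‖p.fst - x‖ : ℝ) : EReal)
      ≤ hFun Q₁ Q₂ A p.fst := by
    by_cases hpx : p.fst = x
    · simp [hpx]
    · exact hp hpx
  rw [HFun_gradient Q₁ A hc hg]
  refine le_trans ?_ (hp'.trans (hFun_le_HFun Q₁ Q₂ A p))
  gcongr
  · have hin : ⟪(mkPr v 0 : Pr n m), p - mkPr x (q (A x))⟫ = ⟪v, p.fst - x⟫ := by
      rw [WithLp.prod_inner_apply]
      change ⟪v, p.fst - x⟫ + ⟪(0 : Eucl m), _⟫ = _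
      rw [inner_zero_left, add_zero]
    exact hin.le
  · exact WithLp.norm_fst_le _ (p - mkPr x (q (A x)))

lemma norm_mkPr_left (d : Eucl n) : ‖(mkPr d 0 : Pr n m)‖ = ‖d‖ :=
  WithLp.norm_toLp_fst 2 (Eucl n) (Eucl m) d

lemma norm_mkPr_right (d : Eucl m) : ‖(mkPr 0 d : Pr n m)‖ = ‖d‖ :=
  WithLp.norm_toLp_snd 2 (Eucl n) (Eucl m) d

lemma continuous_mkPr : Continuous fun z : Eucl n × Eucl m => mkPr z.1 z.2 :=
  WithLp.prod_continuous_toLp 2 (Eucl n) (Eucl m)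

lemma FrechetSubgradAt.slice_fst {F : Pr n m → EReal} {w p : Pr n m}
    (h : FrechetSubgradAt F w p) :
    FrechetSubgradAt (fun x' => F (mkPr x' p.snd)) w.fst p.fst := by
  intro ε hε
  have ht : Tendsto (fun x' : Eucl n => (mkPr x' p.snd : Pr n m)) (𝓝[≠] p.fst) (𝓝[≠] p) := by
    refine tendsto_nhdsWithin_iff.2 ⟨?_, ?_⟩
    · have : Continuous fun x' : Eucl n => (mkPr x' p.snd : Pr n m) :=
        continuous_mkPr.comp (by fun_prop : Continuous fun x' : Eucl n => (x', p.snd))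
      exact (this.tendsto p.fst).mono_left nhdsWithin_le_nhds
    · filter_upwards [self_mem_nhdsWithin] with x' hx' he
      exact hx' (congrArg WithLp.fst he)
  filter_upwards [ht.eventually (h ε hε)] with x' hx'
  have hd : (mkPr x' p.snd : Pr n m) - p = mkPr (x' - p.fst) 0 := by
    apply (WithLp.equiv 2 _).injective
    exact Prod.ext rfl (sub_self p.snd)
  have hin : ⟪w, (mkPr (x' - p.fst) 0 : Pr n m)⟫ = ⟪w.fst, x' - p.fst⟫ := by
    rw [WithLp.prod_inner_apply]
    change ⟪w.fst, x' - p.fst⟫ + ⟪w.snd, (0 : Eucl m)⟫ = _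
    rw [inner_zero_right, add_zero]
  rw [hd, hin, norm_mkPr_left] at hx'
  exact hx'

lemma FrechetSubgradAt.slice_snd {F : Pr n m → EReal} {w p : Pr n m}
    (h : FrechetSubgradAt F w p) :
    FrechetSubgradAt (fun y' => F (mkPr p.fst y')) w.snd p.snd := by
  intro ε hε
  have ht : Tendsto (fun y' : Eucl m => (mkPr p.fst y' : Pr n m)) (𝓝[≠] p.snd) (𝓝[≠] p) := by
    refine tendsto_nhdsWithin_iff.2 ⟨?_, ?_⟩
    · have : Continuous fun y' : Eucl m => (mkPr p.fst y' : Pr n m) :=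
        continuous_mkPr.comp (by fun_prop : Continuous fun y' : Eucl m => (p.fst, y'))
      exact (this.tendsto p.snd).mono_left nhdsWithin_le_nhds
    · filter_upwards [self_mem_nhdsWithin] with y' hmem he
      exact hmem (congrArg WithLp.snd he)
  filter_upwards [ht.eventually (h ε hε)] with y' hmem
  have hd : (mkPr p.fst y' : Pr n m) - p = mkPr 0 (y' - p.snd) := by
    apply (WithLp.equiv 2 _).injective
    exact Prod.ext (sub_self p.fst) rfl
  have hin : ⟪w, (mkPr 0 (y' - p.snd) : Pr n m)⟫ = ⟪w.snd, y' - p.snd⟫ := by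
    rw [WithLp.prod_inner_apply]
    change ⟪w.fst, (0 : Eucl n)⟫ + ⟪w.snd, y' - p.snd⟫ = _
    rw [inner_zero_right, zero_add]
  rw [hd, hin, norm_mkPr_right] at hmem
  exact hmem

/-- The `y`-slice of `H` is convex, so its Fréchet subgradient inequality holds at every `y'`
with `Q₂*(y')` finite. -/
lemma conjE_global_of_slice {Q₁ : Eucl n → EReal} {Q₂ : Eucl m → ℝ} {A : Eucl n →ₗ[ℝ] Eucl m}
    {x : Eucl n} {y w₂ y' : Eucl m} {r k k' : ℝ} (hr : Q₁ x = (r : EReal))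
    (hk : conjE Q₂ y = (k : EReal)) (hk' : conjE Q₂ y' = (k' : EReal))
    (h : FrechetSubgradAt (fun z => HFun Q₁ Q₂ A (mkPr x z)) w₂ y) :
    k + ⟪A x + w₂, y' - y⟫ ≤ k' := by
  by_cases hyy : y' = y
  · subst hyy
    have : k = k' := by rw [hk] at hk'; exact_mod_cast hk'
    simp [this]
  set d := y' - y with hd
  have hd0 : d ≠ 0 := sub_ne_zero.2 hyy
  have key : ∀ ε : ℝ, 0 < ε → k + ⟪A x + w₂, d⟫ - ε * ‖d‖ ≤ k' := by
    intro ε hε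
    have ht : Tendsto (fun t : ℝ => y + t • d) (𝓝[>] 0) (𝓝[≠] y) := by
      refine tendsto_nhdsWithin_iff.2 ⟨?_, ?_⟩
      · have : Continuous fun t : ℝ => y + t • d := by fun_prop
        have h0 := this.tendsto 0
        simp only [zero_smul, add_zero] at h0
        exact h0.mono_left nhdsWithin_le_nhds
      · filter_upwards [self_mem_nhdsWithin] with t ht
        simpa [hd0] using (ne_of_gt ht : t ≠ 0)
    obtain ⟨t, ht1, ht0⟩ := ((ht.eventually (h ε hε)).and (Ioo_mem_nhdsGT one_pos)).exists
    obtain ⟨htp, htl⟩ := ht0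
    have hconv : conjE Q₂ (y + t • d) ≤ (((1 - t) * k + t * k' : ℝ) : EReal) := by
      refine conjE_le_iff.2 fun z => ?_
      have h1 := conjE_le_iff.1 hk.le z
      have h2 := conjE_le_iff.1 hk'.le z
      rw [hd, inner_add_right, inner_smul_right, inner_sub_right]
      nlinarith
    have h3 : ((r - ⟪A x, y⟫ + k + (⟪w₂, y + t • d - y⟫ - ε * ‖y + t • d - y‖) : ℝ) : EReal)
        ≤ ((r - ⟪A x, y + t • d⟫ + ((1 - t) * k + t * k') : ℝ) : EReal) := by
      simp only [HFun_mkPr, hr, hk] at ht1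
      rw [EReal.coe_add, EReal.coe_add, EReal.coe_sub, EReal.coe_add (r - _),
        EReal.coe_sub r ⟪A x, y + t • d⟫]
      refine ht1.trans ?_
      gcongr
    rw [EReal.coe_le_coe_iff, add_sub_cancel_left, norm_smul, Real.norm_of_nonneg htp.le,
      inner_smul_right, inner_add_right, inner_smul_right] at h3
    rw [inner_add_left]
    refine le_of_mul_le_mul_left ?_ htp
    linarith
  refine le_of_forall_pos_le_add fun δ hδ => ?_
  have hdn : 0 < ‖d‖ := norm_pos_iff.2 hd0
  have := key (δ / ‖d‖) (div_pos hδ hdn)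
  rw [div_mul_cancel₀ _ hdn.ne'] at this
  linarith

/-- Sum rule for the smooth part: a subgradient of the `x`-slice of `H` becomes one of `h` after
correcting by `Aᵀ (y - ∇Q₂(Ax))`. -/
lemma frechet_hFun_of_slice {Q₁ : Eucl n → EReal} {Q₂ : Eucl m → ℝ} {q : Eucl m → Eucl m}
    {A : Eucl n →ₗ[ℝ] Eucl m} (hbot : ∀ x, Q₁ x ≠ ⊥)
    (hg : ∀ u, HasGradientAt Q₂ (q u) u) {x w₁ : Eucl n} {y : Eucl m} {r k : ℝ}
    (hr : Q₁ x = (r : EReal)) (hk : conjE Q₂ y = (k : EReal))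
    (h : FrechetSubgradAt (fun z => HFun Q₁ Q₂ A (mkPr z y)) w₁ x) :
    FrechetSubgradAt (hFun Q₁ Q₂ A) (w₁ + A.adjoint (y - q (A x))) x := by
  intro ε hε
  have hder : HasFDerivAt (fun z => Q₂ (A z))
      ((innerSL ℝ (q (A x))).comp (LinearMap.toContinuousLinearMap A)) x :=
    (hg (A x)).hasFDerivAt.comp x (LinearMap.toContinuousLinearMap A).hasFDerivAt
  have hlo := hder.isLittleO.def (half_pos hε)
  filter_upwards [h (ε / 2) (half_pos hε), hlo.filter_mono nhdsWithin_le_nhds] with z hz hz2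
  by_cases htop : Q₁ z = ⊤
  · simp [hFun, htop]
  obtain ⟨s, hs⟩ : ∃ s : ℝ, Q₁ z = s := ⟨_, (EReal.coe_toReal htop (hbot z)).symm⟩
  rw [HFun_mkPr, HFun_mkPr, hr, hk, hs] at hz
  rw [hFun, hFun, hr, hs]
  norm_cast at hz ⊢
  have h4 : Q₂ (A z) - Q₂ (A x) - ⟪q (A x), A (z - x)⟫ ≤ ε / 2 * ‖z - x‖ :=
    (le_abs_self _).trans hz2
  rw [inner_add_left, LinearMap.adjoint_inner_left, inner_sub_left]
  rw [real_inner_comm y, real_inner_comm y] at hz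
  simp only [map_sub, inner_sub_right] at h4 hz ⊢
  linarith

/-- The quantitative core: a Fréchet subgradient `w` of `H` at `p = (x, y)` produces a
subgradient `v` of `h` at `x` of size `O(‖w‖)`, while `H p - h x = O(‖w‖²)`. -/
lemma frechet_HFun_bounds {Q₁ : Eucl n → EReal} {Q₂ : Eucl m → ℝ} {q : Eucl m → Eucl m}
    {A : Eucl n →ₗ[ℝ] Eucl m} (hbot : ∀ x, Q₁ x ≠ ⊥) (hc : ConvexOn ℝ Set.univ Q₂)
    (hg : ∀ u, HasGradientAt Q₂ (q u) u) {ℓ : ℝ} (hℓ : 0 ≤ ℓ)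
    (hlip : ∀ u v, ‖q u - q v‖ ≤ ℓ * ‖u - v‖) {p w : Pr n m}
    (htop : HFun Q₁ Q₂ A p ≠ ⊤) (h : FrechetSubgradAt (HFun Q₁ Q₂ A) w p) :
    ∃ (v : Eucl n) (a b : ℝ), FrechetSubgradAt (hFun Q₁ Q₂ A) v p.fst ∧
      hFun Q₁ Q₂ A p.fst = (a : EReal) ∧ HFun Q₁ Q₂ A p = (b : EReal) ∧
      b - a ≤ ℓ * ‖w‖ ^ 2 ∧
      ‖v‖ ≤ (1 + ‖LinearMap.toContinuousLinearMap A.adjoint‖ * ℓ) * ‖w‖ := by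
  set x := p.fst with hx
  set y := p.snd with hy
  have hH : HFun Q₁ Q₂ A p = Q₁ x - ((⟪A x, y⟫ : ℝ) : EReal) + conjE Q₂ y := rfl
  have hrt : Q₁ x ≠ ⊤ := by
    intro ht
    rw [hH, ht, EReal.top_sub_coe, EReal.top_add_of_ne_bot (conjE_ne_bot Q₂ y)] at htop
    exact htop rfl
  obtain ⟨r, hr⟩ : ∃ r : ℝ, Q₁ x = r := ⟨_, (EReal.coe_toReal hrt (hbot x)).symm⟩
  have hkt : conjE Q₂ y ≠ ⊤ := by
    intro ht
    rw [hH, ht, hr, ← EReal.coe_sub, EReal.coe_add_top] at htop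
    exact htop rfl
  obtain ⟨k, hk⟩ : ∃ k : ℝ, conjE Q₂ y = k := ⟨_, (EReal.coe_toReal hkt (conjE_ne_bot Q₂ y)).symm⟩
  set u := A x + w.snd with hu
  -- Testing the convex subgradient inequality at `∇Q₂ u` shows that `u` is optimal in `Q₂* y`.
  have h1 := conjE_global_of_slice hr hk (conjE_gradient hc hg u) h.slice_snd
  rw [← hu, inner_sub_right] at h1
  have hku : k ≤ ⟪u, y⟫ - Q₂ u := by linarith
  have hyu : y = q u := eq_gradient_of_conjE_le hg (by rw [hk]; exact_mod_cast hku)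
  have hw1 : ‖w.fst‖ ≤ ‖w‖ := WithLp.norm_fst_le _ w
  have hw2 : ‖w.snd‖ ≤ ‖w‖ := WithLp.norm_snd_le _ w
  have hyq : ‖y - q (A x)‖ ≤ ℓ * ‖w.snd‖ := by
    have := hlip u (A x)
    rwa [← hyu, hu, add_sub_cancel_left] at this
  refine ⟨w.fst + A.adjoint (y - q (A x)), r - Q₂ (A x), r - ⟪A x, y⟫ + k,
    frechet_hFun_of_slice hbot hg hr hk h.slice_fst, ?_, ?_, ?_, ?_⟩
  · rw [hFun, hr]; norm_cast
  · rw [hH, hr, hk]; norm_cast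
  · have h2 := gradient_ineq hc hg (A x) u
    have hsub : u - A x = w.snd := add_sub_cancel_left _ _
    rw [hsub, real_inner_comm] at h2
    have h3 : ⟪w.snd, y - q (A x)⟫ ≤ ‖w.snd‖ * (ℓ * ‖w.snd‖) :=
      (real_inner_le_norm _ _).trans (by gcongr)
    have h4 : ℓ * ‖w.snd‖ ^ 2 ≤ ℓ * ‖w‖ ^ 2 := by gcongr
    have h6 : ⟪u, y⟫ = ⟪A x, y⟫ + ⟪w.snd, y⟫ := inner_add_left _ _ _
    rw [inner_sub_right] at h3
    nlinarith
  · have h5 : ‖A.adjoint (y - q (A x))‖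
        ≤ ‖LinearMap.toContinuousLinearMap A.adjoint‖ * ‖y - q (A x)‖ :=
      (LinearMap.toContinuousLinearMap A.adjoint).le_opNorm _
    calc _ ≤ ‖w.fst‖ + ‖A.adjoint (y - q (A x))‖ := norm_add_le _ _
      _ ≤ ‖w‖ + ‖LinearMap.toContinuousLinearMap A.adjoint‖ * (ℓ * ‖w‖) := by
        gcongr
        refine h5.trans ?_
        gcongr
        exact hyq.trans (by gcongr)
      _ = _ := by ring

/-! ### The exponent `1/2` inequality -/

/-- For a positive gap `s`, the inequality with exponent `1/2` is the error bound
`√s ≤ c / 2 * D`. -/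
lemma one_le_KL_half_iff {c s D : ℝ} (hs : 0 < s) :
    1 ≤ c * (1 - 1 / 2) * s ^ (-(1 / 2) : ℝ) * D ↔ √s ≤ c / 2 * D := by
  have h0 : 0 < √s := Real.sqrt_pos.2 hs
  rw [Real.rpow_neg hs.le, ← Real.sqrt_eq_rpow,
    show c * (1 - 1 / 2) * (√s)⁻¹ * D = (c / 2 * D) / √s by ring, one_le_div h0]

end Helpers

/-- Theorem 4.1: transfer of the KL exponent `1/2` from `h(x) = Q₁(x) - Q₂(Ax)` to the majorant
`H(x,y) = Q₁(x) - ⟨Ax, y⟩ + Q₂*(y)` at `(x̄, ∇Q₂(Ax̄))`. -/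
theorem KL_exponent_half_transfer_to_majorant
    {n m : ℕ} (Q₁ : Eucl n → EReal) (Q₂ : Eucl m → ℝ) (q' : Eucl m → Eucl m)
    (A : Eucl n →ₗ[ℝ] Eucl m)
    (hQ₁proper : (∀ x, Q₁ x ≠ ⊥) ∧ ∃ x, Q₁ x ≠ ⊤)
    (hQ₁closed : LowerSemicontinuous Q₁)
    (hQ₂conv : ConvexOn ℝ Set.univ Q₂)
    (hQ₂grad : ∀ u, HasGradientAt Q₂ (q' u) u)
    (hQ₂lip : ∃ ℓ ≥ (0:ℝ), ∀ u v, ‖q' u - q' v‖ ≤ ℓ * ‖u - v‖)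
    (xbar : Eucl n)
    (hdom : (limSubdiff (hFun Q₁ Q₂ A) xbar).Nonempty)
    (hKL : KLExpAt (hFun Q₁ Q₂ A) (1 / 2) xbar) :
    (limSubdiff (HFun Q₁ Q₂ A) (mkPr xbar (q' (A xbar)))).Nonempty ∧
    KLExpAt (HFun Q₁ Q₂ A) (1 / 2) (mkPr xbar (q' (A xbar))) := by
  obtain ⟨ℓ, hℓ, hlip⟩ := hQ₂lip
  have hbot := hQ₁proper.1
  set p₀ : Pr n m := mkPr xbar (q' (A xbar)) with hp₀
  have hH₀ : HFun Q₁ Q₂ A p₀ = hFun Q₁ Q₂ A xbar := HFun_gradient Q₁ A hQ₂conv hQ₂grad xbar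
  have hqc : Continuous q' := by
    refine (LipschitzWith.of_dist_le_mul (K := ⟨ℓ, hℓ⟩) fun u v => ?_).continuous
    rw [dist_eq_norm, dist_eq_norm]
    exact hlip u v
  constructor
  · obtain ⟨v, xs, vs, hxs, hhs, hvs, hF⟩ := hdom
    refine ⟨mkPr v 0, fun k => mkPr (xs k) (q' (A (xs k))), fun k => mkPr (vs k) 0, ?_, ?_, ?_,
      fun k => frechet_HFun_of_hFun hQ₂conv hQ₂grad (hF k)⟩
    · have hc : Continuous fun x : Eucl n => (mkPr x (q' (A x)) : Pr n m) :=
        continuous_mkPr.comp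
          (continuous_id.prodMk (hqc.comp (LinearMap.continuous_of_finiteDimensional A)))
      exact (hc.tendsto xbar).comp hxs
    · simp only [HFun_gradient Q₁ A hQ₂conv hQ₂grad, hH₀]
      exact hhs
    · have hc : Continuous fun x : Eucl n => (mkPr x 0 : Pr n m) :=
        continuous_mkPr.comp (continuous_id.prodMk continuous_const)
      exact (hc.tendsto v).comp hvs
  obtain ⟨c, hc, ε, hε, a, ha, hK⟩ := hKL
  set M : ℝ := 1 + ‖LinearMap.toContinuousLinearMap A.adjoint‖ * ℓ with hM
  have hMpos : 0 < M := by positivity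
  set C : ℝ := ℓ + (c / 2 * M) ^ 2 with hC
  have hCpos : 0 < C := by positivity
  -- The error bound at a Fréchet subgradient, on the full ball of radius `ε`.
  have frechet_bound : ∀ p w : Pr n m, ‖p - p₀‖ ≤ ε → HFun Q₁ Q₂ A p₀ < HFun Q₁ Q₂ A p →
      HFun Q₁ Q₂ A p < HFun Q₁ Q₂ A p₀ + (a : EReal) → FrechetSubgradAt (HFun Q₁ Q₂ A) w p →
      (HFun Q₁ Q₂ A p).toReal - (HFun Q₁ Q₂ A p₀).toReal ≤ C * ‖w‖ ^ 2 := by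
    intro p w hp hlo hhi hw
    obtain ⟨v, α, β, hv, hα, hβ, hgap, hvn⟩ :=
      frechet_HFun_bounds hbot hQ₂conv hQ₂grad hℓ hlip hhi.ne_top hw
    rw [hH₀] at hlo hhi
    rw [hβ, EReal.toReal_coe, hH₀]
    have hle : hFun Q₁ Q₂ A p.fst ≤ HFun Q₁ Q₂ A p := hFun_le_HFun Q₁ Q₂ A p
    by_cases hcase : hFun Q₁ Q₂ A xbar < hFun Q₁ Q₂ A p.fst
    · have hx : ‖p.fst - xbar‖ ≤ ε := (WithLp.norm_fst_le _ (p - p₀)).trans hp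
      have hk := hK p.fst hx hcase (hle.trans_lt hhi) ⟨v, hv.mem_limSubdiff⟩
      have hs : 0 < α - (hFun Q₁ Q₂ A xbar).toReal := by
        have := toReal_lt_of_lt hcase (hFun_ne_bot hbot Q₂ A xbar)
          (by rw [hα]; exact EReal.coe_ne_top α)
        rw [hα, EReal.toReal_coe] at this
        linarith
      rw [hα, EReal.toReal_coe, one_le_KL_half_iff hs] at hk
      have hD : infDist 0 (limSubdiff (hFun Q₁ Q₂ A) p.fst) ≤ M * ‖w‖ := by
        refine (infDist_le_dist_of_mem hv.mem_limSubdiff).trans ?_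
        rwa [dist_zero_left]
      have h1 : √(α - (hFun Q₁ Q₂ A xbar).toReal) ≤ c / 2 * (M * ‖w‖) :=
        hk.trans (by gcongr)
      have h2 := (Real.sqrt_le_left (by positivity)).1 h1
      rw [hC]
      nlinarith
    · have h1 : α ≤ (hFun Q₁ Q₂ A xbar).toReal := by
        have := EReal.toReal_le_toReal (not_lt.1 hcase) (by rw [hα]; exact EReal.coe_ne_bot α)
          hlo.ne_top
        rwa [hα, EReal.toReal_coe] at this
      have h2 : 0 ≤ (c / 2 * M) ^ 2 * ‖w‖ ^ 2 := by positivity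
      rw [hC]
      nlinarith
  -- Half the radius leaves room for the sequences that define limiting subgradients.
  refine ⟨2 * √C, by positivity, ε / 2, by positivity, a, ha, fun p hp hlo hhi hne => ?_⟩
  have hnt : HFun Q₁ Q₂ A p ≠ ⊤ := hhi.ne_top
  have hnb : HFun Q₁ Q₂ A p ≠ ⊥ := hlo.ne_bot
  have hb₀ : HFun Q₁ Q₂ A p₀ ≠ ⊥ := hH₀ ▸ hFun_ne_bot hbot Q₂ A xbar
  have hs : 0 < (HFun Q₁ Q₂ A p).toReal - (HFun Q₁ Q₂ A p₀).toReal :=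
    sub_pos.2 (toReal_lt_of_lt hlo hb₀ hnt)
  rw [one_le_KL_half_iff hs, mul_div_cancel_left₀ _ two_ne_zero]
  have hsC : 0 < √C := Real.sqrt_pos.2 hCpos
  rw [← div_le_iff₀' hsC, le_infDist hne]
  rintro w ⟨ps, ws, hps, hHs, hws, hF⟩
  rw [dist_zero_left, div_le_iff₀' hsC]
  have hlim : (HFun Q₁ Q₂ A p).toReal - (HFun Q₁ Q₂ A p₀).toReal ≤ C * ‖w‖ ^ 2 := by
    refine le_of_tendsto_of_tendsto
      (((EReal.tendsto_toReal hnt hnb).comp hHs).sub_const _) ((hws.norm.pow 2).const_mul C) ?_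
    have hball : ∀ᶠ k in atTop, ‖ps k - p₀‖ < ε :=
      (hps.sub_const p₀).norm.eventually_lt_const (by linarith)
    filter_upwards [hball, hHs.eventually_const_lt hlo, hHs.eventually_lt_const hhi]
      with k h1 h2 h3
    exact frechet_bound (ps k) (ws k) h1.le h2 h3 (hF k)
  calc _ ≤ √(C * ‖w‖ ^ 2) := Real.sqrt_le_sqrt hlim
    _ = √C * ‖w‖ := by rw [Real.sqrt_mul hCpos.le, Real.sqrt_sq (norm_nonneg w)]
end
end

section
/- Let Q₁: ℝⁿ → ℝ ∪ {∞} be proper and closed, Q₂: ℝᵐ → ℝ be convex with ∇Q₂ globally Lipschitz continuous with modulus ℓ, and A: ℝⁿ → ℝᵐ be linear. Define h(x) = Q₁(x) − Q₂(Ax) and H(x, y) = Q₁(x) − ⟨Ax, y⟩ + Q₂*(y). Then for every x ∈ dom Q₁ and every y with ∂Q₂*(y) ≠ ∅ (∂ the convex subdifferential), it holds that H(x, y) ≤ h(x) + (ℓ/2)·dist²(Ax, ∂Q₂*(y)); in particular, for every ũ ∈ ∂Q₂*(y), H(x, y) ≤ h(x) + (ℓ/2)‖ũ − Ax‖². -/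
/-!
The proof rests on two facts about a convex `Q₂` with gradient `q'`.

* Fenchel equality: if `u ∈ ∂Q₂*(y)`, then testing the subgradient inequality at `q' u`, where the
  conjugate equals `⟪u, q' u⟫ - Q₂ u` by the gradient inequality for `Q₂`, gives
  `Q₂*(y) = ⟪u, y⟫ - Q₂ u` (`conjE_eq_of_subgrad`). Hence `u` minimizes `Q₂ - ⟪·, y⟫`, so `q' u = y`.
* Descent lemma: `Q₂ v ≤ Q₂ u + ⟪q' u, v - u⟫ + ℓ / 2 * ‖v - u‖ ^ 2` when `q'` is `ℓ`-Lipschitz.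

At `v = A x` these give the bound for each `u ∈ ∂Q₂*(y)`; the infimum over `u` gives the bound by
the distance.
-/

open Filter Topology Set Metric Bornology
open scoped RealInnerProductSpace

noncomputable section

variable {H : Type*} [NormedAddCommGroup H] [InnerProductSpace ℝ H]

/-- Chain rule along the line `t ↦ u + t • d`. -/
lemma hasDerivAt_along_line {m : ℕ} {Q : Eucl m → ℝ} {q' : Eucl m → Eucl m}
    (hQ : ∀ u, HasGradientAt Q (q' u) u) (u d : Eucl m) (t : ℝ) :
    HasDerivAt (fun s : ℝ => Q (u + s • d)) ⟪q' (u + t • d), d⟫ t := by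
  have h1 : HasDerivAt (fun s : ℝ => u + s • d) d t := by
    simpa using ((hasDerivAt_id t).smul_const d).const_add u
  simpa [Function.comp_def] using
    (hQ (u + t • d)).hasFDerivAt.comp_hasDerivAt t h1

lemma gradient_inequality {m : ℕ} {Q : Eucl m → ℝ} {q' : Eucl m → Eucl m}
    (hconv : ConvexOn ℝ Set.univ Q) (hQ : ∀ u, HasGradientAt Q (q' u) u) (u w : Eucl m) :
    Q u + ⟪q' u, w - u⟫ ≤ Q w := by
  have hc : ConvexOn ℝ Set.univ (fun s : ℝ => Q (u + s • (w - u))) := by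
    have h := hconv.comp_affineMap (AffineMap.lineMap u w : ℝ →ᵃ[ℝ] Eucl m)
    simpa [Function.comp_def, AffineMap.lineMap_apply, add_comm] using h
  have hd := hasDerivAt_along_line hQ u (w - u) 0
  have h := hc.le_slope_of_hasDerivAt (mem_univ 0) (mem_univ 1) one_pos hd
  simp [slope_def_field] at h
  linarith

/-- Descent lemma: the difference of the two sides is monotone along the segment from `u` to `v`,
since its derivative is controlled by the Lipschitz bound and Cauchy–Schwarz. -/
lemma descent_bound {m : ℕ} {Q : Eucl m → ℝ} {q' : Eucl m → Eucl m} {ℓ : ℝ}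
    (hQ : ∀ u, HasGradientAt Q (q' u) u)
    (hlip : ∀ u v, ‖q' u - q' v‖ ≤ ℓ * ‖u - v‖) (u v : Eucl m) :
    Q v ≤ Q u + ⟪q' u, v - u⟫ + ℓ / 2 * ‖v - u‖ ^ 2 := by
  set d := v - u with hd
  let φ : ℝ → ℝ := fun t => Q (u + t • d) - t * ⟪q' u, d⟫ - t ^ 2 * (ℓ / 2 * ‖d‖ ^ 2)
  have hφ : ∀ t, HasDerivAt φ
      (⟪q' (u + t • d), d⟫ - ⟪q' u, d⟫ - 2 * t * (ℓ / 2 * ‖d‖ ^ 2)) t := by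
    intro t
    have h2 := (hasDerivAt_id t).mul_const ⟪q' u, d⟫
    have h3 := (hasDerivAt_pow 2 t).mul_const (ℓ / 2 * ‖d‖ ^ 2)
    refine (((hasDerivAt_along_line hQ u d t).sub h2).sub h3).congr_deriv ?_
    simp
  have hanti : AntitoneOn φ (Icc 0 1) := by
    refine antitoneOn_of_deriv_nonpos (convex_Icc 0 1)
      (fun t _ => (hφ t).continuousAt.continuousWithinAt)
      (fun t _ => (hφ t).differentiableAt.differentiableWithinAt) ?_
    intro t ht
    rw [interior_Icc] at ht
    rw [(hφ t).deriv, ← inner_sub_left]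
    have h1 := real_inner_le_norm (q' (u + t • d) - q' u) d
    have h2 := hlip (u + t • d) u
    rw [add_sub_cancel_left, norm_smul, Real.norm_of_nonneg ht.1.le] at h2
    have h3 := mul_le_mul_of_nonneg_right h2 (norm_nonneg d)
    nlinarith
  have h := hanti (left_mem_Icc.2 zero_le_one) (right_mem_Icc.2 zero_le_one) zero_le_one
  simp [φ, hd] at h
  linarith

/-- Fenchel equality at a subgradient of the conjugate. Only the subgradient inequality at `q' u`
is needed, because there the supremum defining the conjugate is attained at `u`. -/
lemma conjE_eq_of_subgrad {m : ℕ} {Q : Eucl m → ℝ} {q' : Eucl m → Eucl m}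
    (hconv : ConvexOn ℝ Set.univ Q) (hQ : ∀ u, HasGradientAt Q (q' u) u) {u y : Eucl m}
    (hu : ConvexSubgradAtE (conjE Q) u y) :
    conjE Q y = ((⟪u, y⟫ - Q u : ℝ) : EReal) := by
  have hle : conjE Q (q' u) ≤ ((⟪u, q' u⟫ - Q u : ℝ) : EReal) := by
    refine iSup_le fun w => EReal.coe_le_coe_iff.2 ?_
    have h := gradient_inequality hconv hQ u w
    rw [inner_sub_right, real_inner_comm, real_inner_comm u] at h
    linarith
  have hge : ((⟪u, y⟫ - Q u : ℝ) : EReal) ≤ conjE Q y :=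
    le_iSup (fun x : Eucl m => ((⟪x, y⟫ - Q x : ℝ) : EReal)) u
  have h := (hu (q' u)).trans hle
  refine le_antisymm ?_ hge
  generalize conjE Q y = c at h
  induction c with
  | bot => exact bot_le
  | top =>
    rw [EReal.top_add_coe] at h
    exact absurd (top_le_iff.1 h) (EReal.coe_ne_top _)
  | coe c =>
    norm_cast at h ⊢
    rw [inner_sub_right] at h
    linarith

lemma gradient_eq_of_subgrad {m : ℕ} {Q : Eucl m → ℝ} {q' : Eucl m → Eucl m}
    (hconv : ConvexOn ℝ Set.univ Q) (hQ : ∀ u, HasGradientAt Q (q' u) u) {u y : Eucl m}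
    (hu : ConvexSubgradAtE (conjE Q) u y) : q' u = y := by
  have hmin : IsLocalMin (fun w => Q w - ⟪y, w⟫) u := by
    refine Filter.Eventually.of_forall fun w => ?_
    have h : ((⟪w, y⟫ - Q w : ℝ) : EReal) ≤ conjE Q y :=
      le_iSup (fun x : Eucl m => ((⟪x, y⟫ - Q x : ℝ) : EReal)) w
    rw [conjE_eq_of_subgrad hconv hQ hu, EReal.coe_le_coe_iff, real_inner_comm,
      real_inner_comm y u] at h
    change Q u - ⟪y, u⟫ ≤ Q w - ⟪y, w⟫
    linarith
  have h := hmin.hasFDerivAt_eq_zero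
    ((hQ u).hasFDerivAt.sub (innerSL ℝ y).hasFDerivAt)
  refine ext_inner_right ℝ fun w => ?_
  have hw := congrArg (fun L : Eucl m →L[ℝ] ℝ => L w) h
  simpa [sub_eq_zero] using hw

/-- The majorization inequality `H(x,y) ≤ h(x) + (ℓ/2)·dist²(Ax, ∂Q₂*(y))` relating
`h(x) = Q₁(x) - Q₂(Ax)` and `H(x,y) = Q₁(x) - ⟨Ax, y⟩ + Q₂*(y)`. -/
theorem majorant_bound_by_dist_sq
    {n m : ℕ} (Q₁ : Eucl n → EReal) (Q₂ : Eucl m → ℝ) (q' : Eucl m → Eucl m)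
    (A : Eucl n →ₗ[ℝ] Eucl m) (ℓ : ℝ)
    (hQ₁proper : (∀ x, Q₁ x ≠ ⊥) ∧ ∃ x, Q₁ x ≠ ⊤)
    (hQ₁closed : LowerSemicontinuous Q₁)
    (hQ₂conv : ConvexOn ℝ Set.univ Q₂)
    (hQ₂grad : ∀ u, HasGradientAt Q₂ (q' u) u)
    (hℓ : 0 ≤ ℓ)
    (hQ₂lip : ∀ u v, ‖q' u - q' v‖ ≤ ℓ * ‖u - v‖) :
    ∀ x : Eucl n, Q₁ x ≠ ⊤ →
      ∀ y : Eucl m, {u : Eucl m | ConvexSubgradAtE (conjE Q₂) u y}.Nonempty →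
        (Q₁ x - ((⟪A x, y⟫ : ℝ) : EReal) + conjE Q₂ y
            ≤ (Q₁ x - ((Q₂ (A x) : ℝ) : EReal))
              + ((ℓ / 2 * infDist (A x) {u : Eucl m | ConvexSubgradAtE (conjE Q₂) u y} ^ 2
                  : ℝ) : EReal)) ∧
          ∀ u : Eucl m, ConvexSubgradAtE (conjE Q₂) u y →
            Q₁ x - ((⟪A x, y⟫ : ℝ) : EReal) + conjE Q₂ y
              ≤ (Q₁ x - ((Q₂ (A x) : ℝ) : EReal)) + ((ℓ / 2 * ‖u - A x‖ ^ 2 : ℝ) : EReal) := by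
  intro x hx y hne
  obtain ⟨a, ha⟩ : ∃ a : ℝ, Q₁ x = a :=
    ⟨(Q₁ x).toReal, (EReal.coe_toReal hx (hQ₁proper.1 x)).symm⟩
  obtain ⟨u₀, hu₀⟩ := hne
  -- the common value of `⟪u, y⟫ - Q₂ u` over all subgradients `u`
  set c : ℝ := ⟪u₀, y⟫ - Q₂ u₀
  have hc : conjE Q₂ y = (c : EReal) := conjE_eq_of_subgrad hQ₂conv hQ₂grad hu₀
  have key : ∀ u : Eucl m, ConvexSubgradAtE (conjE Q₂) u y →
      c - ⟪A x, y⟫ + Q₂ (A x) ≤ ℓ / 2 * ‖u - A x‖ ^ 2 := by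
    intro u hu
    have h1 : c = ⟪u, y⟫ - Q₂ u :=
      EReal.coe_eq_coe_iff.1 (hc.symm.trans (conjE_eq_of_subgrad hQ₂conv hQ₂grad hu))
    have h2 := descent_bound hQ₂grad hQ₂lip u (A x)
    rw [gradient_eq_of_subgrad hQ₂conv hQ₂grad hu, inner_sub_right, real_inner_comm,
      real_inner_comm u, norm_sub_rev] at h2
    linarith
  rw [hc, ha]
  constructor
  · have hr : c - ⟪A x, y⟫ + Q₂ (A x)
        ≤ ℓ / 2 * infDist (A x) {u : Eucl m | ConvexSubgradAtE (conjE Q₂) u y} ^ 2 := by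
      set r := c - ⟪A x, y⟫ + Q₂ (A x)
      rcases hℓ.eq_or_lt with h0 | hpos
      · have := key u₀ hu₀
        simpa [← h0] using this
      · -- for `ℓ > 0`, the pointwise bounds say that `√(2 r / ℓ)` is a lower bound of the distances
        have hs : Real.sqrt (2 * r / ℓ)
            ≤ infDist (A x) {u : Eucl m | ConvexSubgradAtE (conjE Q₂) u y} := by
          refine (le_infDist ⟨u₀, hu₀⟩).2 fun u hu => ?_
          rw [dist_comm, dist_eq_norm]
          refine Real.sqrt_le_iff.2 ⟨norm_nonneg _, ?_⟩
          rw [div_le_iff₀ hpos]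
          linarith [key u hu]
        have h := (Real.sqrt_le_iff.1 hs).2
        rw [div_le_iff₀ hpos] at h
        linarith
    norm_cast
    linarith
  · intro u hu
    have := key u hu
    norm_cast
    linarith
end
end

section
/- Consider F(x) = f(x) + P₁(x) − P₂(x) with P₂ having globally Lipschitz gradient, and define Ê(x, w) = F(x) + (L/2)‖x − w‖² and E(x, y, w) = f(x) + P₁(x) − ⟨x, y⟩ + P₂*(y) + (L/2)‖x − w‖². If Ê is a KL function with exponent 1/2, then E is a KL function with exponent 1/2. -/
/-!
Write `p = (x, y, w)` and let `q = (u, v, z)` be a limiting subgradient of `E` at a point where `E`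
is finite. Put `s = x + v`.

* In the `y`-variable `E` is `P₂*(y) - ⟨x, y⟩` up to constants. Since `P₂*` is convex, the
  `y`-component of a Fréchet subgradient gives `s ∈ ∂P₂*(y)`, which is equivalent to `y = ∇P₂(s)`
  and to `P₂*(y) = ⟨s, y⟩ - P₂(s)` (`eq_gradient_of_frechet`, `conjE_gradient`). As `∇P₂` is
  `ℓ`-Lipschitz, `‖y - ∇P₂(x)‖ ≤ ℓ ‖v‖`.
* In the `(x, w)`-variables, with `y` frozen, `Ê` differs from `E` by the smooth function
  `⟨x, y⟩ - P₂(x) - P₂*(y)`; therefore `(u + y - ∇P₂(x), z) ∈ ∂Ê(x, w)`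
  (`frechet_hatE3`, `limSubdiff_transfer`).
* By convexity of `P₂`, `0 ≤ E(x, y, w) - Ê(x, w) = P₂(x) - P₂(s) + ⟨v, y⟩
  ≤ ⟨v, y - ∇P₂(x)⟩ ≤ ℓ ‖v‖²`.

At a base point with `y₀ ≠ ∇P₂(x₀)` the first item bounds `‖v‖` from below nearby, and the KL
inequality is immediate. If `y₀ = ∇P₂(x₀)`, then `E(x₀, y₀, w₀) = Ê(x₀, w₀)`, and the KL inequality
for `Ê` at `(x₀, w₀)` together with the last two items yields `E(p) - E(p₀) ≤ K² ‖q‖²`.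
-/

open Filter Topology Set Metric Bornology
open scoped RealInnerProductSpace

noncomputable section

variable {H : Type*} [NormedAddCommGroup H] [InnerProductSpace ℝ H]

/-- Pairs with the ℓ² product inner product structure. -/
abbrev Pr2 (n : ℕ) := WithLp 2 (Eucl n × Eucl n)

/-- `Ê(x, w) = F(x) + L/2 ‖x - w‖²` as a function on pairs. -/
def hatE3 {n : ℕ} (f : Eucl n → ℝ) (P₁ : Eucl n → EReal) (P₂ : Eucl n → ℝ) (L : ℝ)
    (p : Pr2 n) : EReal :=
  ((f ((WithLp.equiv 2 _) p).1 : ℝ) : EReal) + P₁ ((WithLp.equiv 2 _) p).1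
    - ((P₂ ((WithLp.equiv 2 _) p).1 : ℝ) : EReal)
    + ((L / 2 * ‖((WithLp.equiv 2 _) p).1 - ((WithLp.equiv 2 _) p).2‖ ^ 2 : ℝ) : EReal)

/-! ### Convex analysis of `P₂` and its conjugate -/

section Conjugate

variable {g : H → ℝ} {g' : H → H}

/-- First-order characterization of convexity: the gradient is a global subgradient. -/
lemma convexSubgradAt_of_hasGradientAt [CompleteSpace H] (hconv : ConvexOn ℝ Set.univ g)
    (hgrad : ∀ y, HasGradientAt g (g' y) y) (s : H) : ConvexSubgradAt g (g' s) s := by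
  intro x
  have hd : HasDerivAt (fun t : ℝ => g (s + t • (x - s))) ⟪g' s, x - s⟫ 0 := by
    have h1 : HasDerivAt (fun t : ℝ => s + t • (x - s)) (x - s) 0 := by
      simpa using ((hasDerivAt_id (0 : ℝ)).smul_const (x - s)).const_add s
    have h2 : HasFDerivAt g (InnerProductSpace.toDual ℝ H (g' s)) (s + (0 : ℝ) • (x - s)) := by
      simpa using (hgrad s).hasFDerivAt
    have h3 := h2.comp_hasDerivAt (0 : ℝ) h1
    rw [InnerProductSpace.toDual_apply_apply] at h3
    exact h3
  have hc : ConvexOn ℝ Set.univ (fun t : ℝ => g (s + t • (x - s))) := by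
    have := hconv.comp_affineMap (AffineMap.lineMap s x : ℝ →ᵃ[ℝ] H)
    simpa [Function.comp_def, AffineMap.lineMap_apply, add_comm] using this
  have := hc.le_slope_of_hasDerivAt (mem_univ 0) (mem_univ 1) one_pos hd
  simp [slope_def_field] at this
  linarith

lemma le_conjE_s8 (x y : H) : ((⟪x, y⟫ - g x : ℝ) : EReal) ≤ conjE g y :=
  le_iSup (fun x : H => ((⟪x, y⟫ - g x : ℝ) : EReal)) x

lemma conjE_ne_bot_s8 (y : H) : conjE g y ≠ ⊥ := fun h =>
  EReal.coe_ne_bot _ (le_bot_iff.1 (h ▸ le_conjE_s8 (g := g) 0 y))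

/-- Equality in the Fenchel–Young inequality at `y = ∇g(s)`. -/
lemma conjE_gradient_s8 (hsub : ∀ s, ConvexSubgradAt g (g' s) s) (s : H) :
    conjE g (g' s) = ((⟪s, g' s⟫ - g s : ℝ) : EReal) := by
  refine le_antisymm (iSup_le fun x => ?_) (le_conjE_s8 s _)
  have := hsub s x
  rw [inner_sub_right, real_inner_comm, real_inner_comm s] at this
  exact_mod_cast (by linarith : ⟪x, g' s⟫ - g x ≤ ⟪s, g' s⟫ - g s)

/-- If `s` attains the supremum defining `g*(y)`, then `y = ∇g(s)`. -/
lemma eq_gradient_of_conjE_le_s8 [CompleteSpace H] (hgrad : ∀ y, HasGradientAt g (g' y) y) {s y : H}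
    (h : conjE g y ≤ ((⟪s, y⟫ - g s : ℝ) : EReal)) : y = g' s := by
  have hmin : IsLocalMin (fun x => g x - ⟪y, x⟫) s := by
    refine Filter.Eventually.of_forall fun x => ?_
    have h1 : ⟪x, y⟫ - g x ≤ ⟪s, y⟫ - g s := by exact_mod_cast (le_conjE_s8 x y).trans h
    rw [real_inner_comm, real_inner_comm y] at h1
    show g s - ⟪y, s⟫ ≤ g x - ⟪y, x⟫
    linarith
  have hd : HasFDerivAt (fun x => g x - ⟪y, x⟫)
      (InnerProductSpace.toDual ℝ H (g' s) - innerSL ℝ y) s :=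
    (hgrad s).hasFDerivAt.sub (innerSL ℝ y).hasFDerivAt
  have h0 := hmin.hasFDerivAt_eq_zero hd
  have h1 := congrArg (fun l => l (g' s - y)) h0
  simp only [sub_apply, InnerProductSpace.toDual_apply_apply, innerSL_apply_apply,
    zero_apply, ← inner_sub_left] at h1
  exact (sub_eq_zero.1 (inner_self_eq_zero.1 h1)).symm

/-- Convexity of the conjugate along a segment with finite endpoint values. -/
lemma conjE_segment_le {y z : H} {b d t : ℝ} (ht0 : 0 ≤ t) (ht1 : t ≤ 1)
    (hy : conjE g y = b) (hz : conjE g z = d) :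
    conjE g (y + t • (z - y)) ≤ ((b + t * (d - b) : ℝ) : EReal) := by
  refine iSup_le fun x => ?_
  have h1 : ⟪x, y⟫ - g x ≤ b := by exact_mod_cast hy ▸ le_conjE_s8 x y
  have h2 : ⟪x, z⟫ - g x ≤ d := by exact_mod_cast hz ▸ le_conjE_s8 x z
  rw [inner_add_right, inner_smul_right, inner_sub_right]
  exact_mod_cast (by nlinarith [mul_le_mul_of_nonneg_left h2 ht0,
    mul_le_mul_of_nonneg_left h1 (sub_nonneg.2 ht1)] :
    ⟪x, y⟫ + t * (⟪x, z⟫ - ⟪x, y⟫) - g x ≤ b + t * (d - b))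

end Conjugate

/-! ### Generalities on Fréchet subgradients and the exponent-`1/2` inequality -/

lemma FrechetSubgradAt.eventually_nhds {h : H → EReal} {v x : H} (hv : FrechetSubgradAt h v x)
    {ε : ℝ} (hε : 0 < ε) :
    ∀ᶠ y in 𝓝 x, h x + ((⟪v, y - x⟫ - ε * ‖y - x‖ : ℝ) : EReal) ≤ h y := by
  have := eventually_nhdsWithin_iff.1 (hv ε hε)
  filter_upwards [this] with y hy
  by_cases hyx : y = x
  · subst hyx; simp
  · exact hy hyx

lemma KL_half_ineq_iff {c Δ D : ℝ} (hΔ : 0 < Δ) :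
    1 ≤ c * (1 - 1 / 2) * Δ ^ (-(1 / 2) : ℝ) * D ↔ √Δ ≤ c / 2 * D := by
  have hs : 0 < √Δ := Real.sqrt_pos.2 hΔ
  rw [Real.rpow_neg hΔ.le, ← Real.sqrt_eq_rpow]
  have : c * (1 - 1 / 2) * (√Δ)⁻¹ * D = (c / 2 * D) / √Δ := by field_simp; ring
  rw [this, le_div_iff₀ hs, one_mul]

/-- A bound `√(h x - h x₀) ≤ K ‖v‖` for every limiting subgradient `v` gives the KL property with
exponent `1/2`. -/
lemma KLExpAt_half_of_bound {h : H → EReal} {x₀ : H} {K ε a : ℝ} (hK : 0 < K) (hε : 0 < ε)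
    (ha : 0 < a) (hbot : ∀ x, h x ≠ ⊥)
    (H1 : ∀ x, ‖x - x₀‖ ≤ ε → h x₀ < h x → h x < h x₀ + (a : EReal) →
      ∀ v ∈ limSubdiff h x, √((h x).toReal - (h x₀).toReal) ≤ K * ‖v‖) :
    KLExpAt h (1 / 2) x₀ := by
  refine ⟨2 * K, by positivity, ε, hε, a, ha, fun x hx h1 h2 hne => ?_⟩
  have hΔ : 0 < (h x).toReal - (h x₀).toReal :=
    sub_pos.2 <| EReal.coe_lt_coe_iff.1 <| by
      rwa [EReal.coe_toReal (ne_top_of_lt h1) (hbot _), EReal.coe_toReal (ne_top_of_lt h2) (hbot _)]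
  rw [KL_half_ineq_iff hΔ, mul_div_cancel_left₀ _ two_ne_zero, ← div_le_iff₀' hK]
  refine (Metric.le_infDist hne).2 fun v hv => ?_
  rw [dist_zero_left, div_le_iff₀' hK]
  exact H1 x hx h1 h2 v hv

/-! ### Real representations of the two potentials -/

section Potentials

variable {n : ℕ} {f : Eucl n → ℝ} {P₁ : Eucl n → EReal} {P₂ : Eucl n → ℝ} {p₂' : Eucl n → Eucl n}
  {L : ℝ}

lemma potE3_eq_coe {p : Trip n} {r b : ℝ} (hr : P₁ p.fst = r) (hb : conjE P₂ p.snd.fst = b) :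
    potE3 f P₁ P₂ L p = ((f p.fst + r - ⟪p.fst, p.snd.fst⟫ + b
      + L / 2 * ‖p.fst - p.snd.snd‖ ^ 2 : ℝ) : EReal) := by
  change ((f p.fst : ℝ) : EReal) + P₁ p.fst - ((⟪p.fst, p.snd.fst⟫ : ℝ) : EReal)
    + conjE P₂ p.snd.fst + ((L / 2 * ‖p.fst - p.snd.snd‖ ^ 2 : ℝ) : EReal) = _
  rw [hr, hb]
  norm_cast

lemma hatE3_eq_coe {p : Pr2 n} {r : ℝ} (hr : P₁ p.fst = r) :
    hatE3 f P₁ P₂ L p = ((f p.fst + r - P₂ p.fst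
      + L / 2 * ‖p.fst - p.snd‖ ^ 2 : ℝ) : EReal) := by
  change ((f p.fst : ℝ) : EReal) + P₁ p.fst - ((P₂ p.fst : ℝ) : EReal)
    + ((L / 2 * ‖p.fst - p.snd‖ ^ 2 : ℝ) : EReal) = _
  rw [hr]
  norm_cast

lemma potE3_ne_bot (hP : ∀ x, P₁ x ≠ ⊥) (p : Trip n) : potE3 f P₁ P₂ L p ≠ ⊥ := by
  change ((f p.fst : ℝ) : EReal) + P₁ p.fst - ((⟪p.fst, p.snd.fst⟫ : ℝ) : EReal)
    + conjE P₂ p.snd.fst + ((L / 2 * ‖p.fst - p.snd.snd‖ ^ 2 : ℝ) : EReal) ≠ _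
  generalize L / 2 * ‖p.fst - p.snd.snd‖ ^ 2 = c
  simp [EReal.add_eq_bot_iff, sub_eq_add_neg, hP, conjE_ne_bot_s8, ← EReal.coe_neg]

lemma exists_coe_of_potE3_ne_top (hP : ∀ x, P₁ x ≠ ⊥) {p : Trip n}
    (h : potE3 f P₁ P₂ L p ≠ ⊤) :
    (∃ r : ℝ, P₁ p.fst = r) ∧ ∃ b : ℝ, conjE P₂ p.snd.fst = b := by
  change ((f p.fst : ℝ) : EReal) + P₁ p.fst - ((⟪p.fst, p.snd.fst⟫ : ℝ) : EReal)
    + conjE P₂ p.snd.fst + ((L / 2 * ‖p.fst - p.snd.snd‖ ^ 2 : ℝ) : EReal) ≠ _ at h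
  have hc := conjE_ne_bot_s8 (g := P₂) p.snd.fst
  have hp := hP p.fst
  constructor
  · induction hr : P₁ p.fst with
    | bot => exact absurd hr hp
    | coe r => exact ⟨r, rfl⟩
    | top =>
      refine absurd ?_ h
      rw [hr, EReal.coe_add_top, EReal.top_sub_coe, EReal.top_add_of_ne_bot hc, EReal.top_add_coe]
  · induction hb : conjE P₂ p.snd.fst with
    | bot => exact absurd hb hc
    | coe b => exact ⟨b, rfl⟩
    | top =>
      refine absurd ?_ h
      rw [hb, EReal.add_top_of_ne_bot, EReal.top_add_coe]
      simp [EReal.add_eq_bot_iff, sub_eq_add_neg, hP, ← EReal.coe_neg]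

lemma hatE3_eq_top {p : Pr2 n} (hr : P₁ p.fst = ⊤) : hatE3 f P₁ P₂ L p = ⊤ := by
  change ((f p.fst : ℝ) : EReal) + P₁ p.fst - ((P₂ p.fst : ℝ) : EReal)
    + ((L / 2 * ‖p.fst - p.snd‖ ^ 2 : ℝ) : EReal) = _
  rw [hr, EReal.coe_add_top, EReal.top_sub_coe, EReal.top_add_coe]

/-! ### Transfer of subgradients from `E` to `Ê` -/

/-- The `y`-component of a Fréchet subgradient of `E` at a finite point: convexity of `P₂*` makes
`s = x + v` a genuine subgradient of `P₂*` at `y`, hence `y = ∇P₂(s)`. -/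
lemma eq_gradient_of_frechet (hP : ∀ x, P₁ x ≠ ⊥) (hsub : ∀ s, ConvexSubgradAt P₂ (p₂' s) s)
    (hgrad : ∀ y, HasGradientAt P₂ (p₂' y) y) {p q : Trip n} (hfin : potE3 f P₁ P₂ L p ≠ ⊤)
    (hq : FrechetSubgradAt (potE3 f P₁ P₂ L) q p) :
    p.snd.fst = p₂' (p.fst + q.snd.fst) := by
  obtain ⟨⟨r, hr⟩, b, hb⟩ := exists_coe_of_potE3_ne_top hP hfin
  set s := p.fst + q.snd.fst with hs
  set z := p₂' s with hz
  have hd : conjE P₂ z = _ := conjE_gradient_s8 hsub s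
  set d : ℝ := ⟪s, p₂' s⟫ - P₂ s with hdd
  -- It suffices to test the subgradient inequality along the segment from `y` to `∇P₂(s)`.
  have key : ⟪s, z - p.snd.fst⟫ ≤ d - b := by
    refine le_of_forall_pos_le_add fun ε hε => ?_
    have hN : 0 < ‖z - p.snd.fst‖ + 1 := by positivity
    have hε' : 0 < ε / (‖z - p.snd.fst‖ + 1) := by positivity
    have hev := hq.eventually_nhds hε'
    let γ : ℝ → Trip n := fun t =>
      WithLp.toLp 2 (p.fst, WithLp.toLp 2 (p.snd.fst + t • (z - p.snd.fst), p.snd.snd))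
    have hγ : Continuous γ := by
      refine (WithLp.prod_continuous_toLp 2 _ _).comp (continuous_const.prodMk
        ((WithLp.prod_continuous_toLp 2 _ _).comp (Continuous.prodMk ?_ continuous_const)))
      fun_prop
    have hγ0 : γ 0 = p := by
      simp only [γ, zero_smul, add_zero]
      rfl
    have hev' : ∀ᶠ t in 𝓝[>] (0 : ℝ), _ :=
      ((hγ.tendsto' 0 p hγ0).mono_left nhdsWithin_le_nhds).eventually hev
    have hI : ∀ᶠ t in 𝓝[>] (0 : ℝ), t ∈ Ioc (0 : ℝ) 1 := Ioc_mem_nhdsGT one_pos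
    obtain ⟨t, ht, ht0, ht1⟩ := (hev'.and hI).exists
    have hsub' : γ t - p = WithLp.toLp 2 (0, WithLp.toLp 2 (t • (z - p.snd.fst), 0)) := by
      have : γ t - p = WithLp.toLp 2 ((γ t).fst - p.fst, WithLp.toLp 2
        ((γ t).snd.fst - p.snd.fst, (γ t).snd.snd - p.snd.snd)) := rfl
      rw [this]
      simp [γ]
    have hin : ⟪q, γ t - p⟫ = t * ⟪q.snd.fst, z - p.snd.fst⟫ := by
      rw [hsub', WithLp.prod_inner_apply, WithLp.prod_inner_apply]
      simp [inner_smul_right]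
    have hnorm : ‖γ t - p‖ = t * ‖z - p.snd.fst‖ := by
      have h2 : ‖γ t - p‖ ^ 2 = (t * ‖z - p.snd.fst‖) ^ 2 := by
        rw [hsub', WithLp.prod_norm_sq_eq_of_L2, WithLp.toLp_snd, WithLp.prod_norm_sq_eq_of_L2]
        simp [norm_smul, mul_pow]
      exact (pow_left_inj₀ (norm_nonneg _) (by positivity) two_ne_zero).1 h2
    have hseg := conjE_segment_le ht0.le ht1 hb hd
    obtain ⟨e, he⟩ : ∃ e : ℝ, conjE P₂ (p.snd.fst + t • (z - p.snd.fst)) = e :=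
      ⟨_, (EReal.coe_toReal (ne_top_of_le_ne_top (EReal.coe_ne_top _) hseg)
        (conjE_ne_bot_s8 _)).symm⟩
    rw [he] at hseg
    have hseg' : e ≤ b + t * (d - b) := by exact_mod_cast hseg
    rw [potE3_eq_coe hr hb, potE3_eq_coe (p := γ t) (r := r) (b := e) hr he, hin, hnorm] at ht
    have ht' := EReal.coe_le_coe_iff.1 (by exact_mod_cast ht :
      ((f p.fst + r - ⟪p.fst, p.snd.fst⟫ + b + L / 2 * ‖p.fst - p.snd.snd‖ ^ 2
        + (t * ⟪q.snd.fst, z - p.snd.fst⟫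
          - ε / (‖z - p.snd.fst‖ + 1) * (t * ‖z - p.snd.fst‖)) : ℝ) : EReal)
      ≤ ((f p.fst + r - ⟪p.fst, p.snd.fst + t • (z - p.snd.fst)⟫ + e
        + L / 2 * ‖p.fst - p.snd.snd‖ ^ 2 : ℝ) : EReal))
    rw [inner_add_right, inner_smul_right] at ht'
    have hle : ε / (‖z - p.snd.fst‖ + 1) * ‖z - p.snd.fst‖ ≤ ε := by
      rw [div_mul_eq_mul_div, div_le_iff₀ hN]
      nlinarith
    have hsum : ⟪s, z - p.snd.fst⟫ = ⟪p.fst, z - p.snd.fst⟫ + ⟪q.snd.fst, z - p.snd.fst⟫ := by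
      rw [hs, inner_add_left]
    have : t * ⟪s, z - p.snd.fst⟫ ≤ t * (d - b + ε) := by
      have := mul_le_mul_of_nonneg_left hle ht0.le
      rw [hsum]
      linarith
    exact le_of_mul_le_mul_left this ht0
  refine eq_gradient_of_conjE_le_s8 hgrad ?_
  rw [hb]
  rw [inner_sub_right] at key
  exact_mod_cast (by linarith : b ≤ ⟪s, p.snd.fst⟫ - P₂ s)

/-- The projection `(x, y, w) ↦ (x, w)`. -/
def dropY (p : Trip n) : Pr2 n := WithLp.toLp 2 (p.fst, p.snd.snd)

/-- The candidate subgradient `(u + y - ∇P₂(x), z)` of `Ê` at `(x, w)` built from a subgradient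
`q = (u, v, z)` of `E` at `p = (x, y, w)`. -/
def hatSubgrad (p₂' : Eucl n → Eucl n) (p q : Trip n) : Pr2 n :=
  WithLp.toLp 2 (q.fst + p.snd.fst - p₂' p.fst, q.snd.snd)

lemma continuous_dropY : Continuous (dropY (n := n)) := by
  unfold dropY
  exact (WithLp.prod_continuous_toLp 2 _ _).comp ((WithLp.continuous_fst ..).prodMk
    ((WithLp.continuous_snd ..).comp (WithLp.continuous_snd ..)))

/-- With `y` frozen, `Ê = E + ⟨·, y⟩ - P₂ - P₂*(y)` is a smooth perturbation of `E`. -/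
lemma frechet_hatE3 (hP : ∀ x, P₁ x ≠ ⊥)
    (hgrad : ∀ y, HasGradientAt P₂ (p₂' y) y) {p q : Trip n} (hfin : potE3 f P₁ P₂ L p ≠ ⊤)
    (hq : FrechetSubgradAt (potE3 f P₁ P₂ L) q p) :
    FrechetSubgradAt (hatE3 f P₁ P₂ L) (hatSubgrad p₂' p q) (dropY p) := by
  obtain ⟨⟨r, hr⟩, b, hb⟩ := exists_coe_of_potE3_ne_top hP hfin
  intro ε hε
  have hε2 : 0 < ε / 2 := half_pos hε
  have hev := hq.eventually_nhds hε2
  let ι : Pr2 n → Trip n := fun m => WithLp.toLp 2 (m.fst, WithLp.toLp 2 (p.snd.fst, m.snd))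
  have hι : Continuous ι :=
    (WithLp.prod_continuous_toLp 2 _ _).comp ((WithLp.continuous_fst ..).prodMk
      ((WithLp.prod_continuous_toLp 2 _ _).comp
        (continuous_const.prodMk (WithLp.continuous_snd ..))))
  have hev1 := (hι.tendsto' (dropY p) p rfl).eventually hev
  have hev2 := ((WithLp.continuous_fst 2 (Eucl n) (Eucl n)).tendsto' (dropY p) p.fst rfl).eventually
    ((hasGradientAt_iff_isLittleO.1 (hgrad p.fst)).bound hε2)
  refine Filter.Eventually.filter_mono nhdsWithin_le_nhds ?_
  filter_upwards [hev1, hev2] with m h1 h2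
  induction hr' : P₁ m.fst with
  | bot => exact absurd hr' (hP _)
  | top => rw [hatE3_eq_top hr']; exact le_top
  | coe r' =>
    have hsub' : ι m - p =
        WithLp.toLp 2 (m.fst - p.fst, WithLp.toLp 2 (0, m.snd - p.snd.snd)) := by
      have : ι m - p = WithLp.toLp 2 (m.fst - p.fst, WithLp.toLp 2
        (p.snd.fst - p.snd.fst, m.snd - p.snd.snd)) := rfl
      rw [this, sub_self]
    have hsubm : m - dropY p = WithLp.toLp 2 (m.fst - p.fst, m.snd - p.snd.snd) := rfl
    have hin : ⟪q, ι m - p⟫ = ⟪q.fst, m.fst - p.fst⟫ + ⟪q.snd.snd, m.snd - p.snd.snd⟫ := by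
      rw [hsub', WithLp.prod_inner_apply, WithLp.prod_inner_apply]
      simp
    have hnorm : ‖ι m - p‖ = ‖m - dropY p‖ := by
      refine (pow_left_inj₀ (norm_nonneg _) (norm_nonneg _) two_ne_zero).1 ?_
      rw [hsub', hsubm, WithLp.prod_norm_sq_eq_of_L2, WithLp.toLp_snd,
        WithLp.prod_norm_sq_eq_of_L2, WithLp.prod_norm_sq_eq_of_L2]
      simp
    have hfst : ‖m.fst - p.fst‖ ≤ ‖m - dropY p‖ := by
      refine (sq_le_sq₀ (norm_nonneg _) (norm_nonneg _)).1 ?_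
      rw [hsubm, WithLp.prod_norm_sq_eq_of_L2]
      simp
    have hin2 : ⟪hatSubgrad p₂' p q, m - dropY p⟫ = ⟪q.fst, m.fst - p.fst⟫
        + ⟪p.snd.fst, m.fst - p.fst⟫ - ⟪p₂' p.fst, m.fst - p.fst⟫
        + ⟪q.snd.snd, m.snd - p.snd.snd⟫ := by
      rw [hsubm, WithLp.prod_inner_apply]
      simp [hatSubgrad, inner_add_left, inner_sub_left]
    rw [potE3_eq_coe hr hb, potE3_eq_coe (p := ι m) (r := r') (b := b) hr' hb, hin, hnorm] at h1
    have h1' := EReal.coe_le_coe_iff.1 (by exact_mod_cast h1 :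
      ((f p.fst + r - ⟪p.fst, p.snd.fst⟫ + b + L / 2 * ‖p.fst - p.snd.snd‖ ^ 2
        + (⟪q.fst, m.fst - p.fst⟫ + ⟪q.snd.snd, m.snd - p.snd.snd⟫
          - ε / 2 * ‖m - dropY p‖) : ℝ) : EReal)
      ≤ ((f m.fst + r' - ⟪m.fst, p.snd.fst⟫ + b
        + L / 2 * ‖m.fst - m.snd‖ ^ 2 : ℝ) : EReal))
    rw [hatE3_eq_coe (p := dropY p) (r := r) hr, hatE3_eq_coe hr', hin2, ← EReal.coe_add,
      EReal.coe_le_coe_iff]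
    have h3 := (abs_le.1 (Real.norm_eq_abs _ ▸ h2)).2
    have h4 : ⟪p.snd.fst, m.fst - p.fst⟫ = ⟪m.fst, p.snd.fst⟫ - ⟪p.fst, p.snd.fst⟫ := by
      rw [inner_sub_right, real_inner_comm, real_inner_comm p.fst]
    have h5 := mul_le_mul_of_nonneg_left hfst hε2.le
    change f p.fst + r - P₂ p.fst + L / 2 * ‖p.fst - p.snd.snd‖ ^ 2 + _ ≤ _
    linarith

/-- Limiting version of `eq_gradient_of_frechet` and `frechet_hatE3`. The values of `Ê` converge
along the approximating sequence because `P₂*(yₖ) = ⟨sₖ, yₖ⟩ - P₂(sₖ)` with `sₖ = xₖ + vₖ`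
convergent. -/
lemma limSubdiff_transfer (hP : ∀ x, P₁ x ≠ ⊥) (hsub : ∀ s, ConvexSubgradAt P₂ (p₂' s) s)
    (hgrad : ∀ y, HasGradientAt P₂ (p₂' y) y) (hcont : Continuous P₂) (hcont' : Continuous p₂')
    {p q : Trip n} (hfin : potE3 f P₁ P₂ L p ≠ ⊤)
    (hq : q ∈ limSubdiff (potE3 f P₁ P₂ L) p) :
    p.snd.fst = p₂' (p.fst + q.snd.fst) ∧
      hatSubgrad p₂' p q ∈ limSubdiff (hatE3 f P₁ P₂ L) (dropY p) := by
  obtain ⟨ps, qs, hps, hEs, hqs, hF⟩ := hq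
  obtain ⟨N, hN⟩ := eventually_atTop.1 (hEs.eventually_lt_const (lt_top_iff_ne_top.2 hfin))
  have hfinN : ∀ k, potE3 f P₁ P₂ L (ps (k + N)) ≠ ⊤ := fun k => (hN _ (by omega)).ne
  replace hps := hps.comp (tendsto_add_atTop_nat N)
  replace hEs := hEs.comp (tendsto_add_atTop_nat N)
  replace hqs := hqs.comp (tendsto_add_atTop_nat N)
  have hx := ((WithLp.continuous_fst 2 _ _).tendsto p).comp hps
  have hy := (((WithLp.continuous_fst 2 _ _).comp (WithLp.continuous_snd 2 _ _)).tendsto p).comp hps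
  have hu := ((WithLp.continuous_fst 2 _ _).tendsto q).comp hqs
  have hv := (((WithLp.continuous_fst 2 _ _).comp (WithLp.continuous_snd 2 _ _)).tendsto q).comp hqs
  have hz := (((WithLp.continuous_snd 2 _ _).comp (WithLp.continuous_snd 2 _ _)).tendsto q).comp hqs
  have hs := hx.add hv
  have hyk : ∀ k, (ps (k + N)).snd.fst = p₂' ((ps (k + N)).fst + (qs (k + N)).snd.fst) := fun k =>
    eq_gradient_of_frechet hP hsub hgrad (hfinN k) (hF _)
  have hyp : p.snd.fst = p₂' (p.fst + q.snd.fst) := by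
    refine tendsto_nhds_unique hy ?_
    refine ((hcont'.tendsto _).comp hs).congr fun k => ?_
    exact (hyk k).symm
  refine ⟨hyp, fun k => dropY (ps (k + N)), fun k => hatSubgrad p₂' (ps (k + N)) (qs (k + N)),
    (continuous_dropY.tendsto p).comp hps, ?_, ?_, fun k =>
      frechet_hatE3 hP hgrad (hfinN k) (hF _)⟩
  · -- `G` is the real number `⟨x, y⟩ - P₂*(y) - P₂(x)`, written through `s = x + v`.
    let G : Eucl n → Eucl n → Eucl n → ℝ := fun x y s => ⟪x, y⟫ - (⟪s, y⟫ - P₂ s) - P₂ x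
    have hrel : ∀ {p' q' : Trip n}, potE3 f P₁ P₂ L p' ≠ ⊤ →
        p'.snd.fst = p₂' (p'.fst + q'.snd.fst) →
        hatE3 f P₁ P₂ L (dropY p') = (((potE3 f P₁ P₂ L p').toReal
          + G p'.fst p'.snd.fst (p'.fst + q'.snd.fst) : ℝ) : EReal) := by
      intro p' q' hfin' hy'
      obtain ⟨⟨r, hr⟩, -⟩ := exists_coe_of_potE3_ne_top hP hfin'
      have hb := conjE_gradient_s8 hsub (p'.fst + q'.snd.fst)
      rw [← hy'] at hb
      rw [potE3_eq_coe hr hb, hatE3_eq_coe (p := dropY p') (r := r) hr, EReal.toReal_coe,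
        EReal.coe_eq_coe_iff]
      simp only [G, dropY, WithLp.toLp_fst, WithLp.toLp_snd]
      ring
    simp only [fun k => hrel (hfinN k) (hyk k), hrel hfin hyp]
    refine (continuous_coe_real_ereal.tendsto _).comp (Tendsto.add ?_ ?_)
    · exact (EReal.tendsto_toReal hfin (potE3_ne_bot hP p)).comp hEs
    · exact ((hx.inner hy).sub ((hs.inner hy).sub ((hcont.tendsto _).comp hs))).sub
        ((hcont.tendsto _).comp hx)
  · exact ((WithLp.prod_continuous_toLp 2 _ _).tendsto _).comp
      (((hu.add hy).sub ((hcont'.tendsto _).comp hx)).prodMk_nhds hz)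

end Potentials

/-- Theorem 4.2(i): if `Ê(x,w) = F(x) + L/2‖x-w‖²` is a KL function with exponent `1/2`,
then so is the potential `E(x,y,w) = f(x) + P₁(x) - ⟨x,y⟩ + P₂*(y) + L/2‖x-w‖²`. -/
theorem KL_half_hatE_implies_KL_half_E
    {n : ℕ} (f : Eucl n → ℝ) (f' : Eucl n → Eucl n) (P₁ : Eucl n → EReal)
    (P₂ : Eucl n → ℝ) (p₂' : Eucl n → Eucl n) (L : ℝ)
    (hL : 0 < L)
    (hfconv : ConvexOn ℝ Set.univ f)
    (hfgrad : ∀ y, HasGradientAt f (f' y) y)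
    (hflip : ∀ y z, ‖f' y - f' z‖ ≤ L * ‖y - z‖)
    (hP₁ : ProperClosedConvexE P₁)
    (hP₂cont : Continuous P₂)
    (hP₂conv : ConvexOn ℝ Set.univ P₂)
    (hP₂grad : ∀ y, HasGradientAt P₂ (p₂' y) y)
    (hP₂lip : ∃ ℓ ≥ (0:ℝ), ∀ u v, ‖p₂' u - p₂' v‖ ≤ ℓ * ‖u - v‖)
    (hKL : IsKLWithExp (hatE3 f P₁ P₂ L) (1 / 2)) :
    IsKLWithExp (potE3 f P₁ P₂ L) (1 / 2) := by
  have hP : ∀ x, P₁ x ≠ ⊥ := hP₁.1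
  have hsub := convexSubgradAt_of_hasGradientAt hP₂conv hP₂grad
  obtain ⟨ℓ, hℓ, hlip⟩ := hP₂lip
  have hcont' : Continuous p₂' :=
    (LipschitzWith.of_dist_le_mul (K := ⟨ℓ, hℓ⟩) fun u v => by
      rw [dist_eq_norm, dist_eq_norm]
      exact hlip u v).continuous
  have htr : ∀ {p q : Trip n}, potE3 f P₁ P₂ L p ≠ ⊤ → q ∈ limSubdiff (potE3 f P₁ P₂ L) p → _ :=
    fun hfin hq => limSubdiff_transfer hP hsub hP₂grad hP₂cont hcont' hfin hq
  have hv_le : ∀ q : Trip n, ‖q.snd.fst‖ ≤ ‖q‖ := fun q =>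
    (WithLp.norm_fst_le ..).trans (WithLp.norm_snd_le ..)
  have hdropY_le : ∀ q : Trip n, ‖dropY q‖ ≤ ‖q‖ := fun q => by
    refine (sq_le_sq₀ (norm_nonneg _) (norm_nonneg _)).1 ?_
    rw [WithLp.prod_norm_sq_eq_of_L2, WithLp.prod_norm_sq_eq_of_L2, WithLp.prod_norm_sq_eq_of_L2]
    simp only [dropY, WithLp.toLp_fst, WithLp.toLp_snd]
    linarith [sq_nonneg ‖q.snd.fst‖]
  -- The `v`-component of a subgradient controls the residual `y - ∇P₂(x)`.
  have hres : ∀ {p q : Trip n}, p.snd.fst = p₂' (p.fst + q.snd.fst) →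
      ‖p.snd.fst - p₂' p.fst‖ ≤ ℓ * ‖q.snd.fst‖ := fun {p q} hy => by
    rw [hy]
    simpa using hlip (p.fst + q.snd.fst) p.fst
  intro p₀ ⟨q₀, hq₀⟩
  by_cases hfin₀ : potE3 f P₁ P₂ L p₀ = ⊤
  · exact ⟨1, one_pos, 1, one_pos, 1, one_pos, fun x _ h1 => absurd h1 (by simp [hfin₀])⟩
  obtain ⟨hy₀, hq₀'⟩ := htr hfin₀ hq₀
  by_cases hyx : p₀.snd.fst = p₂' p₀.fst
  swap
  · -- Away from `y = ∇P₂(x)` the subgradients of `E` are bounded away from zero.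
    have hδ : 0 < ‖p₀.snd.fst - p₂' p₀.fst‖ := norm_pos_iff.2 (sub_ne_zero.2 hyx)
    set δ := ‖p₀.snd.fst - p₂' p₀.fst‖
    have hc : Continuous fun p : Trip n => ‖p.snd.fst - p₂' p.fst‖ :=
      (((WithLp.continuous_fst 2 _ _).comp (WithLp.continuous_snd 2 _ _)).sub
        (hcont'.comp (WithLp.continuous_fst 2 _ _))).norm
    obtain ⟨ε, hε, hball⟩ := Metric.nhds_basis_closedBall.eventually_iff.1
      ((hc.tendsto p₀).eventually_const_lt (half_lt_self hδ))
    refine KLExpAt_half_of_bound (K := 2 * (ℓ + 1) / δ) (by positivity) hε one_pos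
      (potE3_ne_bot hP) fun p hp h1 h2 q hq => ?_
    have hfin := ne_top_of_lt h2
    have hlow : δ / 2 < ‖p.snd.fst - p₂' p.fst‖ := hball (by
      rwa [mem_closedBall, dist_eq_norm])
    have hup := hres (htr hfin hq).1
    have hΔ : (potE3 f P₁ P₂ L p).toReal - (potE3 f P₁ P₂ L p₀).toReal ≤ 1 := by
      lift potE3 f P₁ P₂ L p to ℝ using ⟨hfin, potE3_ne_bot hP p⟩ with e
      lift potE3 f P₁ P₂ L p₀ to ℝ using ⟨hfin₀, potE3_ne_bot hP p₀⟩ with e₀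
      have : e < e₀ + 1 := by exact_mod_cast h2
      simp only [EReal.toReal_coe]
      linarith
    refine (Real.sqrt_le_one.2 hΔ).trans ?_
    rw [div_mul_eq_mul_div, le_div_iff₀ hδ]
    nlinarith [mul_le_mul_of_nonneg_left (hv_le q) hℓ, norm_nonneg q]
  -- Now `E(x₀, y₀, w₀) = Ê(x₀, w₀)`.
  obtain ⟨c, hc, ε, hε, a, ha, hKL₀⟩ := hKL (dropY p₀) ⟨_, hq₀'⟩
  refine KLExpAt_half_of_bound (K := c / 2 * (1 + ℓ) + (1 + ℓ)) (by positivity) hε ha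
    (potE3_ne_bot hP) fun p hp h1 h2 q hq => ?_
  have hfin := ne_top_of_lt h2
  obtain ⟨hy, hq'⟩ := htr hfin hq
  obtain ⟨⟨r, hr⟩, -⟩ := exists_coe_of_potE3_ne_top hP hfin
  obtain ⟨⟨r₀, hr₀⟩, -⟩ := exists_coe_of_potE3_ne_top hP hfin₀
  have hb := conjE_gradient_s8 hsub (p.fst + q.snd.fst)
  rw [← hy] at hb
  have hb₀ := conjE_gradient_s8 hsub p₀.fst
  rw [← hyx] at hb₀
  have hE := potE3_eq_coe (f := f) (L := L) hr hb
  have hE₀ := potE3_eq_coe (f := f) (L := L) hr₀ hb₀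
  have hH : hatE3 f P₁ P₂ L (dropY p) = _ := hatE3_eq_coe (p := dropY p) (r := r) hr
  have hH₀ : hatE3 f P₁ P₂ L (dropY p₀) = _ := hatE3_eq_coe (p := dropY p₀) (r := r₀) hr₀
  have hKLp := hKL₀ (dropY p) ((hdropY_le (p - p₀)).trans hp)
  simp only [dropY, WithLp.toLp_fst, WithLp.toLp_snd] at hH hH₀
  set e := f p.fst + r - ⟪p.fst, p.snd.fst⟫ + (⟪p.fst + q.snd.fst, p.snd.fst⟫
    - P₂ (p.fst + q.snd.fst)) + L / 2 * ‖p.fst - p.snd.snd‖ ^ 2 with he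
  set e₀ := f p₀.fst + r₀ - ⟪p₀.fst, p₀.snd.fst⟫ + (⟪p₀.fst, p₀.snd.fst⟫ - P₂ p₀.fst)
    + L / 2 * ‖p₀.fst - p₀.snd.snd‖ ^ 2 with he₀
  set m := f p.fst + r - P₂ p.fst + L / 2 * ‖p.fst - p.snd.snd‖ ^ 2 with hm
  have hm₀ : f p₀.fst + r₀ - P₂ p₀.fst + L / 2 * ‖p₀.fst - p₀.snd.snd‖ ^ 2 = e₀ := by
    rw [he₀]; ring
  rw [hm₀] at hH₀
  rw [inner_add_left, real_inner_comm p.snd.fst q.snd.fst] at he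
  have hgap_nonneg : m ≤ e := by
    have h := hsub (p.fst + q.snd.fst) p.fst
    rw [← hy, sub_add_cancel_left, inner_neg_right] at h
    linarith
  have hgap : e - m ≤ ℓ * ‖q.snd.fst‖ ^ 2 := by
    have h := hsub p.fst (p.fst + q.snd.fst)
    rw [add_sub_cancel_left] at h
    have h3 := real_inner_le_norm (p.snd.fst - p₂' p.fst) q.snd.fst
    rw [inner_sub_left] at h3
    nlinarith [mul_le_mul_of_nonneg_right (hres hy) (norm_nonneg q.snd.fst)]
  rw [hE, hE₀, EReal.coe_lt_coe_iff] at h1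
  rw [hE, hE₀, ← EReal.coe_add, EReal.coe_lt_coe_iff] at h2
  rw [hE, hE₀, EReal.toReal_coe, EReal.toReal_coe]
  have hd : ‖hatSubgrad p₂' p q‖ ≤ (1 + ℓ) * ‖q‖ := by
    have hsplit : hatSubgrad p₂' p q
        = dropY q + WithLp.toLp 2 (p.snd.fst - p₂' p.fst, 0) := by
      have : dropY q + WithLp.toLp 2 (p.snd.fst - p₂' p.fst, 0)
        = WithLp.toLp 2 (q.fst + (p.snd.fst - p₂' p.fst), q.snd.snd + 0) := rfl
      rw [this, add_zero, ← add_sub_assoc]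
      rfl
    have h0 : ‖(WithLp.toLp 2 (p.snd.fst - p₂' p.fst, 0) : Pr2 n)‖ = ‖p.snd.fst - p₂' p.fst‖ := by
      simp
    rw [hsplit]
    refine (norm_add_le _ _).trans ?_
    rw [h0]
    linarith [hdropY_le q, hres hy, mul_le_mul_of_nonneg_left (hv_le q) hℓ]
  have hbase : m - e₀ ≤ (c / 2 * ((1 + ℓ) * ‖q‖)) ^ 2 := by
    rcases le_or_gt m e₀ with hle | hlt
    · exact (sub_nonpos.2 hle).trans (sq_nonneg _)
    · have hk := hKLp (by rw [dropY, dropY, hH, hH₀]; exact_mod_cast hlt)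
        (by rw [dropY, dropY, hH, hH₀]; exact_mod_cast (by linarith : m < e₀ + a)) ⟨_, hq'⟩
      rw [show (hatE3 f P₁ P₂ L (dropY p)).toReal = m by rw [dropY, hH, EReal.toReal_coe],
        show (hatE3 f P₁ P₂ L (dropY p₀)).toReal = e₀ by rw [dropY, hH₀, EReal.toReal_coe],
        KL_half_ineq_iff (sub_pos.2 hlt)] at hk
      have hinf := Metric.infDist_le_dist_of_mem (x := 0) hq'
      rw [dist_zero_left] at hinf
      refine (Real.sqrt_le_left (by positivity)).1 (hk.trans ?_)
      exact mul_le_mul_of_nonneg_left (hinf.trans hd) (by positivity)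
  refine (Real.sqrt_le_left (by positivity)).2 ?_
  have hv2 : ℓ * ‖q.snd.fst‖ ^ 2 ≤ ((1 + ℓ) * ‖q‖) ^ 2 := by
    have h1 : ‖q.snd.fst‖ ^ 2 ≤ ‖q‖ ^ 2 := by gcongr; exact hv_le q
    have h2 : ℓ ≤ (1 + ℓ) ^ 2 := by nlinarith
    rw [mul_pow]
    exact mul_le_mul h2 h1 (by positivity) (by positivity)
  have hcross : 0 ≤ (c / 2 * ((1 + ℓ) * ‖q‖)) * ((1 + ℓ) * ‖q‖) := by positivity
  calc e - e₀ ≤ (c / 2 * ((1 + ℓ) * ‖q‖)) ^ 2 + ((1 + ℓ) * ‖q‖) ^ 2 := by linarith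
    _ ≤ ((c / 2 * (1 + ℓ) + (1 + ℓ)) * ‖q‖) ^ 2 := by nlinarith
end
end

section
/- Consider F(x) = f(x) + P₁(x) − P₂(x) where f is a convex quadratic function on ℝⁿ and P₁ − P₂ is the MCP regularizer (P₁(x) = λ‖x‖₁ and P₂(x) = λ∑_{i=1}^n ∫₀^{|x_i|} min{1, t/(θλ)} dt with λ > 0, θ > 1) or the SCAD regularizer (P₁(x) = λ‖x‖₁ and P₂(x) = λ∑_{i=1}^n ∫₀^{|x_i|} [min{θλ, t} − λ]₊/((θ−1)λ) dt with λ > 0, θ > 2). Then the function E(x, y, w) = f(x) + P₁(x) − ⟨x, y⟩ + P₂*(y) + (L/2)‖x − w‖² is a KL function with exponent 1/2. -/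
/-!
The components of `P₂` are piecewise quadratic, and their conjugates are
`μ|y| + κ/2 y²` on `[-lam, lam]` and `+∞` outside, with `(μ, κ) = (0, θ)` for MCP and
`(lam, θ - 1)` for SCAD (`isComp_MCP`, `isComp_SCAD`, `conj_finite`, `conj_top`). Hence `E` is a
quadratic function, in general nonconvex, plus the separable polyhedral function
`lam‖x‖₁ + μ‖y‖₁ + ι(‖y‖_∞ ≤ lam)` (`potE3_eq`).

Fix `z₀` and let `z` be a nearby point of the domain. Let `W` be the space of directions that move
only those coordinates of `z` that are not at a kink of the polyhedral part. A coordinate of `z`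
that is at a kink agrees with that of `z₀`, so `d = z - z₀ ∈ W`, and
`E z - E z₀ = r d + β d d / 2` where `r`, `β` depend only on the signs of the coordinates of `z`.
Since `E` is smooth along `W` near `z`, every limiting subgradient `v` at `z` satisfies
`⟪v, e⟫ = r e + β d e` for `e ∈ W`, whence `‖v‖ ≥ ‖(r + β d)|_W‖`. It remains to bound
`|r d + β d d / 2|` by `C ‖r + β d‖²` on `W` near `0` (`quad_bound`). If `r = 0`, replace one `d`
in `β d d` by some `d'` with `β d' = β d` and `‖d'‖ ≤ K ‖β d‖`; if `r ≠ 0`, the right side is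
bounded below. There are finitely many sign patterns, so the constants can be made uniform
(`kl_of_pieces`).
-/

open Filter Topology Set Metric Bornology
open scoped RealInnerProductSpace

noncomputable section

variable {H : Type*} [NormedAddCommGroup H] [InnerProductSpace ℝ H]

/-! ### The KL inequality for piecewise quadratic functions -/

/-- A linear map on a finite-dimensional space is boundedly invertible modulo its kernel. -/
lemma exists_bounded_preimage {W F : Type*} [NormedAddCommGroup W] [NormedSpace ℝ W]
    [FiniteDimensional ℝ W] [NormedAddCommGroup F] [NormedSpace ℝ F] (B : W →ₗ[ℝ] F) :
    ∃ K, 0 ≤ K ∧ ∀ d, ∃ d', B d' = B d ∧ ‖d'‖ ≤ K * ‖B d‖ := by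
  obtain ⟨g, hg⟩ := B.rangeRestrict.exists_rightInverse_of_surjective B.range_rangeRestrict
  refine ⟨‖g.toContinuousLinearMap‖, ContinuousLinearMap.opNorm_nonneg _,
    fun d => ⟨g (B.rangeRestrict d), ?_, ?_⟩⟩
  · exact congrArg Subtype.val (LinearMap.congr_fun hg (B.rangeRestrict d))
  · simpa using g.toContinuousLinearMap.le_opNorm (B.rangeRestrict d)

/-- The inequality underlying the exponent `1/2`, for `q d = r d + β d d / 2`, whose derivative
at `d` is `r + β d`: near `0`, `|q d|` is at most a multiple of the squared norm of the
derivative. For `r = 0` the form only sees `d` modulo its kernel; for `r ≠ 0` the derivative is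
bounded away from zero. -/
lemma quad_bound {W : Type*} [NormedAddCommGroup W] [NormedSpace ℝ W] [FiniteDimensional ℝ W]
    (β : W →L[ℝ] W →L[ℝ] ℝ) (hs : ∀ a b, β a b = β b a) (r : W →L[ℝ] ℝ) :
    ∃ C > (0:ℝ), ∀ᶠ d in 𝓝 (0 : W), |r d + β d d / 2| ≤ C * ‖r + β d‖ ^ 2 := by
  by_cases hr : r = 0
  · subst hr
    obtain ⟨K, hK0, hK⟩ := exists_bounded_preimage β.toLinearMap
    refine ⟨K + 1, by positivity, Eventually.of_forall fun d => ?_⟩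
    -- `d'` has the same image as `d` under `β`, but its norm is controlled by that image
    obtain ⟨d', h1, h2⟩ := hK d
    simp only [ContinuousLinearMap.coe_coe] at h1 h2
    have h3 : β d d = β d d' := by rw [hs d d', h1]
    have h4 : |β d d'| ≤ ‖β d‖ * ‖d'‖ := (β d).le_opNorm d'
    have h5 : |β d d| ≤ K * ‖β d‖ ^ 2 := by
      rw [h3]
      calc _ ≤ _ := h4
        _ ≤ ‖β d‖ * (K * ‖β d‖) := by gcongr
        _ = _ := by ring
    simp only [zero_apply, zero_add, abs_div, abs_two]
    nlinarith [sq_nonneg ‖β d‖, abs_nonneg (β d d)]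
  · have hr' : 0 < ‖r‖ := norm_pos_iff.2 hr
    have c1 : Tendsto (fun d : W => |r d + β d d / 2|) (𝓝 0) (𝓝 0) := by
      have : Continuous fun d : W => |r d + β d d / 2| := by fun_prop
      simpa using this.tendsto 0
    have c2 : Tendsto (fun d : W => ‖r + β d‖) (𝓝 0) (𝓝 ‖r‖) := by
      have : Continuous fun d : W => ‖r + β d‖ := by fun_prop
      simpa using this.tendsto 0
    refine ⟨1 / (‖r‖ / 2) ^ 2, by positivity, ?_⟩
    filter_upwards [c1.eventually_le_const one_pos,
      c2.eventually_const_le (half_lt_self hr')] with d h1 h2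
    calc _ ≤ (1:ℝ) := h1
      _ = 1 / (‖r‖ / 2) ^ 2 * (‖r‖ / 2) ^ 2 := by field_simp
      _ ≤ _ := by gcongr

/-- If `h` is finite and exactly quadratic along the line `z + ℝe` near `z`, a Fréchet
subgradient cannot exceed the directional derivative; `frechet_dir` gets equality by reversing
the direction. -/
lemma frechet_dir_le {h : H → EReal} {v z e : H} {c k a : ℝ} (he : e ≠ 0) (hz : h z = a)
    (hd : ∀ᶠ t in 𝓝 (0:ℝ), h (z + t • e) = ((a + (t * c + t ^ 2 * k) : ℝ) : EReal))
    (hv : FrechetSubgradAt h v z) : ⟪v, e⟫ ≤ c := by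
  refine le_of_forall_pos_le_add fun η hη => ?_
  have hne : 0 < ‖e‖ := norm_pos_iff.2 he
  have h1 := hv (η / ‖e‖) (by positivity)
  have h2 : Tendsto (fun t : ℝ => z + t • e) (𝓝[>] 0) (𝓝[≠] z) := by
    refine tendsto_nhdsWithin_iff.2 ⟨?_, ?_⟩
    · have : Continuous fun t : ℝ => z + t • e := by fun_prop
      simpa using (this.tendsto 0).mono_left nhdsWithin_le_nhds
    · filter_upwards [self_mem_nhdsWithin] with t ht
      simpa [he] using (ne_of_gt ht : t ≠ 0)
  have h3 : ∀ᶠ t in 𝓝[>] (0:ℝ), ⟪v, e⟫ ≤ c + η + t * k := by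
    filter_upwards [h2.eventually h1, hd.filter_mono nhdsWithin_le_nhds, self_mem_nhdsWithin]
      with t h4 h5 h6
    have h6 : 0 < t := h6
    rw [h5, hz, ← EReal.coe_add, EReal.coe_le_coe_iff] at h4
    rw [add_sub_cancel_left, inner_smul_right, norm_smul, Real.norm_of_nonneg h6.le] at h4
    have h7 : η / ‖e‖ * (t * ‖e‖) = t * η := by field_simp
    rw [h7] at h4
    have : t * ⟪v, e⟫ ≤ t * (c + η + t * k) := by nlinarith
    exact le_of_mul_le_mul_left this h6
  have h4 : Tendsto (fun t : ℝ => c + η + t * k) (𝓝[>] 0) (𝓝 (c + η)) := by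
    have : Continuous fun t : ℝ => c + η + t * k := by fun_prop
    simpa using (this.tendsto 0).mono_left nhdsWithin_le_nhds
  exact ge_of_tendsto h4 h3

lemma frechet_dir {h : H → EReal} {v z e : H} {c k a : ℝ} (he : e ≠ 0) (hz : h z = a)
    (hd : ∀ᶠ t in 𝓝 (0:ℝ), h (z + t • e) = ((a + (t * c + t ^ 2 * k) : ℝ) : EReal))
    (hv : FrechetSubgradAt h v z) : ⟪v, e⟫ = c := by
  refine le_antisymm (frechet_dir_le he hz hd hv) ?_
  have := frechet_dir_le (e := -e) (c := -c) (k := k) (neg_ne_zero.2 he) hz ?_ hv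
  · rw [inner_neg_right] at this; linarith
  · have h0 : Tendsto (fun t : ℝ => -t) (𝓝 0) (𝓝 0) := by
      simpa using (continuous_neg (G := ℝ)).tendsto 0
    filter_upwards [h0.eventually hd] with t ht
    rw [show z + t • -e = z + -t • e by simp, ht]
    congr 2; ring

/-- KL exponent `1/2` for functions that are quadratic on finitely many kinds of pieces.
The piece of `z` has label `idx z`, direction space `W (idx z)`, and quadratic function
`q (idx z)`, with second-order part `β` common to all pieces. Hypothesis `ha` says that near `z`
the function `h` varies like `q (idx z)` along `W (idx z)`, which determines the components of
subgradients at `z` along that space. Hypothesis `hb` says that every `z` near `z₀` has `z₀` in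
the closure of its piece, so that `h z - h z₀` is also computed by `q (idx z)`. -/
lemma kl_of_pieces {V : Type*} [NormedAddCommGroup V] [InnerProductSpace ℝ V]
    [FiniteDimensional ℝ V] {ι : Type*} [Finite ι] (h : V → EReal)
    (β : V →ₗ[ℝ] V →ₗ[ℝ] ℝ) (hβ : ∀ a b, β a b = β b a)
    (W : ι → Submodule ℝ V) (r : ι → V →ₗ[ℝ] ℝ) (q : ι → V → ℝ)
    (hq : ∀ i z e, q i (z + e) = q i z + (r i e + β z e) + β e e / 2)
    (idx : V → ι) (hbot : ∀ z, h z ≠ ⊥)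
    (ha : ∀ z, h z ≠ ⊤ → ∃ U ∈ 𝓝 z, ∀ z' ∈ U, ∀ z'' ∈ U, z'' - z' ∈ W (idx z) → h z' ≠ ⊤ →
      h z'' = h z' + ((q (idx z) z'' - q (idx z) z' : ℝ) : EReal))
    (hb : ∀ z₀, h z₀ ≠ ⊤ → ∀ᶠ z in 𝓝 z₀, h z ≠ ⊤ → z - z₀ ∈ W (idx z) ∧
      h z = h z₀ + ((q (idx z) z - q (idx z) z₀ : ℝ) : EReal)) :
    IsKLWithExp h (1 / 2) := by
  -- along the subspace of its piece, a limiting subgradient is the gradient of the quadratic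
  have key : ∀ z, h z ≠ ⊤ → ∀ v ∈ limSubdiff h z, ∀ e ∈ W (idx z),
      ⟪v, e⟫ = r (idx z) e + β z e := by
    rintro z hz v ⟨zs, vs, hzs, hhs, hvs, hF⟩ e he
    by_cases he0 : e = 0
    · simp [he0]
    obtain ⟨U, hU, hUq⟩ := ha z hz
    have hfin : ∀ᶠ k in atTop, h (zs k) ≠ ⊤ := by
      filter_upwards [hhs.eventually (isOpen_ne.mem_nhds hz)] with k hk using hk
    have heq : ∀ᶠ k in atTop, ⟪vs k, e⟫ = r (idx z) e + β (zs k) e := by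
      filter_upwards [hfin, hzs.eventually (eventually_mem_nhds_iff.2 hU)] with k h1 h2
      have hc : h (zs k) = ((h (zs k)).toReal : EReal) :=
        (EReal.coe_toReal h1 (hbot _)).symm
      refine frechet_dir (k := β e e / 2) he0 hc ?_ (hF k)
      have h3 : Tendsto (fun t : ℝ => zs k + t • e) (𝓝 0) (𝓝 (zs k)) := by
        have : Continuous fun t : ℝ => zs k + t • e := by fun_prop
        simpa using this.tendsto 0
      filter_upwards [h3.eventually h2] with t ht
      rw [hUq _ (mem_of_mem_nhds h2) _ ht (by simpa using (W (idx z)).smul_mem t he) h1]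
      conv_lhs => rw [hc]
      rw [← EReal.coe_add, hq]
      congr 2
      simp only [map_smul, LinearMap.smul_apply, smul_eq_mul]
      ring
    have hl : Tendsto (fun k => ⟪vs k, e⟫) atTop (𝓝 ⟪v, e⟫) := hvs.inner tendsto_const_nhds
    have hr : Tendsto (fun k => r (idx z) e + β (zs k) e) atTop
        (𝓝 (r (idx z) e + β z e)) := by
      have : Continuous fun x => β x e :=
        (β.flip e).continuous_of_finiteDimensional
      exact tendsto_const_nhds.add ((this.tendsto z).comp hzs)
    exact tendsto_nhds_unique (hl.congr' heq) hr
  intro z₀ _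
  by_cases hz₀ : h z₀ = ⊤
  · exact ⟨1, one_pos, 1, one_pos, 1, one_pos, fun x _ h1 => by simp [hz₀] at h1⟩
  -- the quadratic estimate, piece by piece
  have hQ : ∀ i, ∃ C > (0:ℝ), ∀ᶠ z in 𝓝 z₀, ∀ hd : z - z₀ ∈ W i, ∀ v : V,
      (∀ e ∈ W i, ⟪v, e⟫ = r i e + β z e) → q i z - q i z₀ ≤ C * ‖v‖ ^ 2 := by
    intro i
    let B : W i →L[ℝ] W i →L[ℝ] ℝ := LinearMap.toContinuousLinearMap
      ((LinearMap.toContinuousLinearMap (𝕜 := ℝ) (E := W i) (F' := ℝ)).toLinearMap ∘ₗ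
        β.compl₁₂ (W i).subtype (W i).subtype)
    have hB : ∀ a b : W i, B a b = β a b := fun a b => rfl
    let R : W i →L[ℝ] ℝ := LinearMap.toContinuousLinearMap ((r i + β z₀) ∘ₗ (W i).subtype)
    have hR : ∀ a : W i, R a = r i a + β z₀ a := fun a => rfl
    obtain ⟨C, hC, hev⟩ := quad_bound B (fun a b => by rw [hB, hB, hβ]) R
    refine ⟨C, hC, ?_⟩
    obtain ⟨ε, hε, hball⟩ := Metric.eventually_nhds_iff.1 hev
    filter_upwards [Metric.ball_mem_nhds z₀ hε] with z hz hd v hv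
    have h1 := hball (y := ⟨z - z₀, hd⟩) (by
      rw [dist_zero_right]; simpa [dist_eq_norm] using hz)
    have h2 : ‖R + B ⟨z - z₀, hd⟩‖ ≤ ‖v‖ := by
      refine ContinuousLinearMap.opNorm_le_bound _ (norm_nonneg _) fun e => ?_
      have h3 : (R + B ⟨z - z₀, hd⟩) e = ⟪v, (e : V)⟫ := by
        rw [hv e e.2, add_apply, hB, hR]
        simp
      rw [h3]
      exact norm_inner_le_norm v (e : V)
    have h4 : q i z - q i z₀ = R ⟨z - z₀, hd⟩ + B ⟨z - z₀, hd⟩ ⟨z - z₀, hd⟩ / 2 := by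
      have := hq i z₀ (z - z₀)
      rw [add_sub_cancel] at this
      rw [hB, hR, this]
      ring
    rw [h4]
    calc _ ≤ _ := le_abs_self _
      _ ≤ _ := h1
      _ ≤ _ := by gcongr
  choose C hC hCev using hQ
  cases nonempty_fintype ι
  have hev := (eventually_all.2 hCev).and (hb z₀ hz₀)
  obtain ⟨ε, hε, hball⟩ := Metric.eventually_nhds_iff.1 hev
  set M : ℝ := ∑ i, C i + 1 with hM
  have hCM : ∀ i, C i ≤ M := fun i => by
    have := Finset.single_le_sum (f := C) (fun j _ => (hC j).le) (Finset.mem_univ i)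
    linarith
  have hM0 : 0 < M := by
    have : 0 ≤ ∑ i, C i := Finset.sum_nonneg fun j _ => (hC j).le
    linarith
  refine ⟨2 * √M, by positivity, ε / 2, by positivity, 1, one_pos, ?_⟩
  intro z hz hlt hlt2 hne
  have hzt : h z ≠ ⊤ := (hlt2.trans_le le_top).ne
  obtain ⟨hCz, hbz⟩ := hball (y := z) (by rw [dist_eq_norm]; linarith)
  obtain ⟨hW, hval⟩ := hbz hzt
  have hz₀c := (EReal.coe_toReal hz₀ (hbot _))
  have hdiff : (h z).toReal - (h z₀).toReal = q (idx z) z - q (idx z) z₀ := by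
    rw [hval, ← hz₀c, ← EReal.coe_add, EReal.toReal_coe, EReal.toReal_coe]; ring
  have hpos : 0 < (h z).toReal - (h z₀).toReal := by
    rw [← hz₀c, ← EReal.coe_toReal hzt (hbot _), EReal.coe_lt_coe_iff] at hlt
    linarith
  set δ := (h z).toReal - (h z₀).toReal with hδ
  have hinf : √(δ / M) ≤ infDist 0 (limSubdiff h z) := by
    refine (le_infDist hne).2 fun v hv => ?_
    rw [dist_zero_left]
    refine Real.sqrt_le_iff.2 ⟨norm_nonneg _, ?_⟩
    rw [div_le_iff₀ hM0, hdiff]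
    have := hCz (idx z) hW v (key z hzt v hv)
    nlinarith [hCM (idx z), sq_nonneg ‖v‖]
  have hs : δ ^ (-(1 / 2 : ℝ)) = (√δ)⁻¹ := by
    rw [Real.rpow_neg hpos.le, Real.sqrt_eq_rpow]
  rw [hs]
  have hsδ : 0 < √δ := Real.sqrt_pos.2 hpos
  calc (1:ℝ) = 2 * √M * (1 - 1 / 2) * (√δ)⁻¹ * √(δ / M) := by
        rw [Real.sqrt_div hpos.le]
        have : 0 < √M := Real.sqrt_pos.2 hM0
        field_simp; norm_num
    _ ≤ _ := by gcongr

/-! ### The conjugate of the MCP and SCAD components -/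

/-- The tangent line inequality for the primitive of a continuous monotone function. -/
lemma integral_tangent {g : ℝ → ℝ} (hg : Continuous g) (hm : Monotone g) (a b : ℝ) :
    (∫ t in (0:ℝ)..b, g t) + g b * (a - b) ≤ ∫ t in (0:ℝ)..a, g t := by
  have hi : ∀ c d : ℝ, IntervalIntegrable g MeasureTheory.volume c d :=
    fun c d => hg.intervalIntegrable c d
  have h1 := intervalIntegral.integral_add_adjacent_intervals (hi 0 b) (hi b a)
  rcases le_total b a with h | h
  · have h2 : ∫ t in b..a, g b ≤ ∫ t in b..a, g t :=
      intervalIntegral.integral_mono_on h (by simp) (hi _ _) fun x hx => hm hx.1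
    rw [intervalIntegral.integral_const, smul_eq_mul] at h2
    linarith
  · have h2 : ∫ t in a..b, g t ≤ ∫ t in a..b, g b :=
      intervalIntegral.integral_mono_on h (hi _ _) (by simp) fun x hx => hm hx.2
    rw [intervalIntegral.integral_const, smul_eq_mul] at h2
    have h3 := intervalIntegral.integral_symm (f := g) (μ := MeasureTheory.volume) a b
    linarith

/-- The properties of a one-dimensional component `p` of `P₂` which say that its conjugate is
`p*(y) = μ|y| + κ/2 y²` for `|y| ≤ lam`, and (through the linear growth bound `le`) `+∞`
elsewhere. -/
structure IsComp (p : ℝ → ℝ) (lam μ κ : ℝ) : Prop where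
  le : ∀ s, p s ≤ lam * |s|
  young : ∀ s y, |y| ≤ lam → s * y - p s ≤ μ * |y| + κ / 2 * y ^ 2
  attained : ∀ y, |y| ≤ lam → ∃ s, s * y - p s = μ * |y| + κ / 2 * y ^ 2

/-- For `p s = lam ∫₀^{|s|} g` with `g` monotone, the supremum defining `p*(y)` is attained where
`lam * g = |y|`, that is at `|s| = μ + κ|y|`. -/
lemma IsComp.of_integral {g : ℝ → ℝ} {lam μ κ : ℝ} (hlam : 0 < lam) (hg : Continuous g)
    (hm : Monotone g) (h1 : ∀ t, g t ≤ 1) (hμ : 0 ≤ μ) (hκ : 0 < κ)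
    (hval : ∀ y, 0 < y → y ≤ lam → lam * g (μ + κ * y) = y ∧
      lam * ∫ t in (0:ℝ)..(μ + κ * y), g t = κ / 2 * y ^ 2)
    (h0 : 0 ≤ g 0) :
    IsComp (fun s => lam * ∫ t in (0:ℝ)..|s|, g t) lam μ κ := by
  refine ⟨fun s => ?_, fun s y hy => ?_, fun y hy => ?_⟩
  · have h2 : ∫ t in (0:ℝ)..|s|, g t ≤ ∫ t in (0:ℝ)..|s|, (1:ℝ) :=
      intervalIntegral.integral_mono_on (abs_nonneg s) (hg.intervalIntegrable _ _) (by simp)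
        fun x _ => h1 x
    rw [intervalIntegral.integral_const, smul_eq_mul] at h2
    have := mul_le_mul_of_nonneg_left h2 hlam.le
    simpa using this
  · have hsy : s * y ≤ |s| * |y| := by rw [← abs_mul]; exact le_abs_self _
    rw [← sq_abs y]
    rcases eq_or_lt_of_le (abs_nonneg y) with hy0 | hy0
    · have : 0 ≤ ∫ t in (0:ℝ)..|s|, g t :=
        intervalIntegral.integral_nonneg (abs_nonneg s) fun t ht => h0.trans (hm ht.1)
      have := mul_nonneg hlam.le this
      rw [← hy0] at hsy ⊢
      nlinarith
    · obtain ⟨e1, e2⟩ := hval |y| hy0 hy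
      have := mul_le_mul_of_nonneg_left (integral_tangent hg hm |s| (μ + κ * |y|)) hlam.le
      rw [mul_add, e2, ← mul_assoc, e1] at this
      nlinarith
  · rcases eq_or_lt_of_le (abs_nonneg y) with hy0 | hy0
    · have : y = 0 := abs_eq_zero.1 hy0.symm
      exact ⟨0, by simp [this]⟩
    · obtain ⟨e1, e2⟩ := hval |y| hy0 hy
      refine ⟨(SignType.sign y : ℝ) * (μ + κ * |y|), ?_⟩
      have hs : |(SignType.sign y : ℝ) * (μ + κ * |y|)| = μ + κ * |y| := by
        rw [abs_mul, abs_of_nonneg (by positivity : 0 ≤ μ + κ * |y|)]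
        rcases lt_or_gt_of_ne (abs_pos.1 hy0) with h | h <;> simp [h]
      rw [hs, e2, mul_right_comm, sign_mul_self, sq_abs, ← sq_abs y]
      ring

lemma isComp_MCP {lam θ : ℝ} (hlam : 0 < lam) (hθ : 1 < θ) :
    IsComp (fun s => lam * ∫ t in (0:ℝ)..|s|, min 1 (t / (θ * lam))) lam 0 θ := by
  have hθ0 : 0 < θ := by linarith
  refine IsComp.of_integral hlam (by fun_prop) ?_ (fun t => min_le_left _ _) le_rfl
    hθ0 (fun y hy hyl => ⟨?_, ?_⟩) (by simp)
  · intro s t hst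
    simp only
    gcongr
  · rw [zero_add, min_eq_right]
    · field_simp
    · rw [div_le_one (by positivity)]; gcongr
  · have : ∫ t in (0:ℝ)..(0 + θ * y), min 1 (t / (θ * lam))
        = ∫ t in (0:ℝ)..(0 + θ * y), t / (θ * lam) := by
      refine intervalIntegral.integral_congr fun t ht => ?_
      rw [uIcc_of_le (by positivity), zero_add] at ht
      refine min_eq_right ?_
      rw [div_le_one (by positivity)]
      exact ht.2.trans (by gcongr)
    rw [this, intervalIntegral.integral_div, integral_id]
    field_simp
    ring

lemma isComp_SCAD {lam θ : ℝ} (hlam : 0 < lam) (hθ : 2 < θ) :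
    IsComp (fun s => lam * ∫ t in (0:ℝ)..|s|, max (min (θ * lam) t - lam) 0 / ((θ - 1) * lam))
      lam lam (θ - 1) := by
  have hθ1 : 0 < θ - 1 := by linarith
  have hD : 0 < (θ - 1) * lam := by positivity
  have hcont : Continuous fun t : ℝ => max (min (θ * lam) t - lam) 0 / ((θ - 1) * lam) := by
    fun_prop
  refine IsComp.of_integral hlam hcont ?_ ?_ hlam.le
    hθ1 (fun y hy hyl => ⟨?_, ?_⟩) (by positivity)
  · intro s t hst
    simp only
    gcongr
  · intro t
    rw [div_le_one hD]
    refine max_le ?_ hD.le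
    have := min_le_left (θ * lam) t
    linarith
  · have : (θ - 1) * y ≤ (θ - 1) * lam := by gcongr
    rw [min_eq_right (by linarith), max_eq_left (by nlinarith)]
    field_simp
    ring
  · have hy1 : (θ - 1) * y ≤ (θ - 1) * lam := by gcongr
    have hy0 : 0 < (θ - 1) * y := by positivity
    rw [← intervalIntegral.integral_add_adjacent_intervals
      (hcont.intervalIntegrable 0 lam) (hcont.intervalIntegrable lam _)]
    have e1 : ∫ t in (0:ℝ)..lam, max (min (θ * lam) t - lam) 0 / ((θ - 1) * lam)
        = ∫ t in (0:ℝ)..lam, (0:ℝ) := by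
      refine intervalIntegral.integral_congr fun t ht => ?_
      rw [uIcc_of_le hlam.le] at ht
      have := min_le_right (θ * lam) t
      rw [max_eq_right (by linarith [ht.2]), zero_div]
    have e2 : ∫ t in lam..(lam + (θ - 1) * y), max (min (θ * lam) t - lam) 0 / ((θ - 1) * lam)
        = ∫ t in lam..(lam + (θ - 1) * y), (t - lam) / ((θ - 1) * lam) := by
      refine intervalIntegral.integral_congr fun t ht => ?_
      rw [uIcc_of_le (by linarith)] at ht
      rw [min_eq_right (by linarith [ht.2]), max_eq_left (by linarith [ht.1])]
    rw [e1, e2, intervalIntegral.integral_div,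
      intervalIntegral.integral_comp_sub_right (fun t => t) lam, integral_id]
    simp
    field_simp

lemma conj_finite {n : ℕ} {P₂ : Eucl n → ℝ} {p : ℝ → ℝ} {lam μ κ : ℝ}
    (hp : IsComp p lam μ κ) (hP : ∀ x, P₂ x = ∑ i, p (x i)) (y : Eucl n)
    (hy : ∀ i, |y i| ≤ lam) :
    conjE P₂ y = ((∑ i, (μ * |y i| + κ / 2 * y i ^ 2) : ℝ) : EReal) := by
  have hterm : ∀ x : Eucl n, ⟪x, y⟫ - P₂ x = ∑ i, (x i * y i - p (x i)) := fun x => by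
    rw [hP, Finset.sum_sub_distrib, PiLp.inner_apply]
    simp [mul_comm]
  refine le_antisymm (iSup_le fun x => ?_) ?_
  · rw [hterm, EReal.coe_le_coe_iff]
    exact Finset.sum_le_sum fun i _ => hp.young _ _ (hy i)
  · choose s hs using fun i => hp.attained (y i) (hy i)
    refine le_iSup_of_le (WithLp.toLp 2 s : Eucl n) ?_
    rw [hterm, EReal.coe_le_coe_iff]
    exact (Finset.sum_congr rfl fun i _ => (hs i).symm).le

lemma conj_top {n : ℕ} {P₂ : Eucl n → ℝ} {p : ℝ → ℝ} {lam μ κ : ℝ}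
    (hp : IsComp p lam μ κ) (hlam : 0 < lam) (hP : ∀ x, P₂ x = ∑ i, p (x i)) (y : Eucl n)
    (hy : ¬ ∀ i, |y i| ≤ lam) : conjE P₂ y = ⊤ := by
  push Not at hy
  obtain ⟨i, hi⟩ := hy
  refine EReal.eq_top_iff_forall_lt _ |>.2 fun M => ?_
  set t : ℝ := (|M| + 1) / (|y i| - lam) with ht
  have hd : 0 < |y i| - lam := by linarith
  have ht0 : 0 < t := by positivity
  refine lt_of_lt_of_le ?_
    (le_iSup _ (EuclideanSpace.single i (t * (SignType.sign (y i) : ℝ)) : Eucl n))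
  rw [EReal.coe_lt_coe_iff, hP]
  have h1 : ∑ j, p ((EuclideanSpace.single i (t * (SignType.sign (y i) : ℝ)) : Eucl n) j)
      ≤ lam * |t * (SignType.sign (y i) : ℝ)| := by
    calc _ ≤ ∑ j, lam *
          |(EuclideanSpace.single i (t * (SignType.sign (y i) : ℝ)) : Eucl n) j| :=
          Finset.sum_le_sum fun j _ => hp.le _
      _ = _ := by
          rw [Finset.sum_eq_single i]
          · simp
          · intro j _ hj; simp [hj]
          · simp
  have h2 : lam * |t * (SignType.sign (y i) : ℝ)| = lam * t := by
    have hy0 : y i ≠ 0 := abs_pos.1 (hlam.trans hi)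
    rw [abs_mul, abs_of_pos ht0]
    rcases lt_or_gt_of_ne hy0 with h | h <;> simp [h]
  have h3 : ⟪(EuclideanSpace.single i (t * (SignType.sign (y i) : ℝ)) : Eucl n), y⟫
      = t * |y i| := by
    rw [EuclideanSpace.inner_single_left]
    simp [mul_assoc, sign_mul_self]
  have h4 : t * |y i| - lam * t = |M| + 1 := by
    rw [ht]; field_simp
  rw [h3]
  linarith [le_abs_self M]

/-! ### Kinks of the absolute value and of the box -/

/-- The sign of `s`, set to `0` when `lam ≤ |s|`: it vanishes at the kinks `0` and `±lam` of
`μ|·| + κ/2 (·)² + ι_{[-lam, lam]}`, and is the slope of `|·|` between them. -/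
def boxSign (lam s : ℝ) : SignType := if |s| < lam then SignType.sign s else 0

lemma abs_eventually_linear (a : ℝ) (ha : SignType.sign a ≠ 0) :
    ∀ᶠ s in 𝓝 a, |s| = (SignType.sign a : ℝ) * s := by
  rw [sign_ne_zero] at ha
  rcases lt_or_gt_of_ne ha with h | h
  · filter_upwards [eventually_lt_nhds h] with s hs
    simp [h, abs_of_neg hs]
  · filter_upwards [eventually_gt_nhds h] with s hs
    simp [h, abs_of_pos hs]

lemma box_eventually_linear (lam a : ℝ) (ha : boxSign lam a ≠ 0) :
    ∀ᶠ s in 𝓝 a, |s| ≤ lam ∧ |s| = (boxSign lam a : ℝ) * s := by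
  unfold boxSign at ha ⊢
  split_ifs at ha ⊢ with h
  · have h1 : ∀ᶠ s in 𝓝 a, |s| < lam := continuous_abs.continuousAt.eventually_lt_const h
    filter_upwards [h1, abs_eventually_linear a ha] with s h2 h3 using ⟨h2.le, h3⟩
  · exact absurd rfl ha

/-- Near `a`, the point `a` lies in the closure of the linearity interval of `|·|` around `s`;
if `s` is itself the kink, then `s = a`. -/
lemma sign_near (a : ℝ) : ∀ᶠ s in 𝓝 a, (SignType.sign s = 0 → s = a) ∧
    |s| - |a| = (SignType.sign s : ℝ) * (s - a) := by
  rcases lt_trichotomy a 0 with h | h | h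
  · filter_upwards [eventually_lt_nhds h] with s hs
    simp [hs, abs_of_neg hs, abs_of_neg h]
    ring
  · subst h
    refine Eventually.of_forall fun s => ⟨by simp, ?_⟩
    simp [sign_mul_self]
  · filter_upwards [eventually_gt_nhds h] with s hs
    simp [hs, abs_of_pos hs, abs_of_pos h]

/-- The analogue of `sign_near` on `[-lam, lam]`, where `±lam` count as kinks as well. -/
lemma box_near {lam : ℝ} (a : ℝ) : ∀ᶠ s in 𝓝 a, |s| ≤ lam →
    (boxSign lam s = 0 → s = a) ∧ |s| - |a| = (boxSign lam s : ℝ) * (s - a) := by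
  have hk : ∀ c : ℝ, ∀ᶠ s in 𝓝 a, s = c → s = a := fun c => by
    by_cases hc : a = c
    · exact Eventually.of_forall fun s hs => hs.trans hc.symm
    · filter_upwards [isOpen_ne.mem_nhds hc] with s hs h using absurd h hs
  filter_upwards [sign_near a, hk lam, hk (-lam)] with s h1 h2 h3 hs
  unfold boxSign
  split_ifs with h
  · exact h1
  · have h4 : |s| = lam := le_antisymm hs (not_lt.1 h)
    have h5 : s = a := by
      rcases abs_choice s with h6 | h6
      · exact h2 (h6.symm.trans h4)
      · exact h3 (by linarith)
    simp [h5]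

/-! ### The quadratic pieces of the potential -/

/-- The subspace of directions that leave unchanged the `x`-coordinates with `s.1 i = 0` and
the `y`-coordinates with `s.2 i = 0`. -/
def pieceDir {n : ℕ} (s : (Fin n → SignType) × (Fin n → SignType)) : Submodule ℝ (Trip n) where
  carrier := {e | ∀ i, (s.1 i = 0 → e.fst i = 0) ∧ (s.2 i = 0 → e.snd.fst i = 0)}
  add_mem' := fun {a b} ha hb i =>
    ⟨fun h => by simp [(ha i).1 h, (hb i).1 h], fun h => by simp [(ha i).2 h, (hb i).2 h]⟩
  zero_mem' := fun i => by simp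
  smul_mem' := fun c a ha i =>
    ⟨fun h => by simp [(ha i).1 h], fun h => by simp [(ha i).2 h]⟩

/-- The symmetric bilinear form giving the second-order part of `E` on every piece. -/
def hessE {n : ℕ} (T : Eucl n →ₗ[ℝ] Eucl n) (L κ : ℝ) : Trip n →ₗ[ℝ] Trip n →ₗ[ℝ] ℝ :=
  LinearMap.mk₂ ℝ
    (fun z e => (⟪z.fst, T e.fst⟫ + ⟪e.fst, T z.fst⟫) / 2 - ⟪z.fst, e.snd.fst⟫
      - ⟪e.fst, z.snd.fst⟫ + κ * ⟪z.snd.fst, e.snd.fst⟫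
      + L * ⟪z.fst - z.snd.snd, e.fst - e.snd.snd⟫)
    (fun a b c => by
      simp only [WithLp.add_fst, WithLp.add_snd, map_add, inner_add_left, inner_add_right,
        inner_sub_left, inner_sub_right]; ring)
    (fun t a c => by
      simp only [WithLp.smul_fst, WithLp.smul_snd, map_smul, real_inner_smul_left,
        real_inner_smul_right, inner_sub_left, inner_sub_right, smul_eq_mul]; ring)
    (fun a b c => by
      simp only [WithLp.add_fst, WithLp.add_snd, map_add, inner_add_left, inner_add_right,
        inner_sub_left, inner_sub_right]; ring)
    (fun t a c => by
      simp only [WithLp.smul_fst, WithLp.smul_snd, map_smul, real_inner_smul_left,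
        real_inner_smul_right, inner_sub_left, inner_sub_right, smul_eq_mul]; ring)

/-- The linear part, at the origin, of the quadratic function of a piece. -/
def linE {n : ℕ} (b : Eucl n) (lam μ : ℝ) (s : (Fin n → SignType) × (Fin n → SignType)) :
    Trip n →ₗ[ℝ] ℝ where
  toFun e := ⟪b, e.fst⟫ + lam * ∑ i, (s.1 i : ℝ) * e.fst i + μ * ∑ i, (s.2 i : ℝ) * e.snd.fst i
  map_add' := fun x y => by
    simp only [WithLp.add_fst, WithLp.add_snd, inner_add_right, PiLp.add_apply, mul_add,
      Finset.sum_add_distrib]; ring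
  map_smul' := fun t x => by
    simp only [WithLp.smul_fst, WithLp.smul_snd, real_inner_smul_right, PiLp.smul_apply,
      smul_eq_mul, RingHom.id_apply, mul_left_comm _ t, ← Finset.mul_sum]; ring

/-- The smooth part of `E`: everything except `lam‖x‖₁`, `μ‖y‖₁` and the box constraint. -/
def smoothE {n : ℕ} (f : Eucl n → ℝ) (L κ : ℝ) (z : Trip n) : ℝ :=
  f z.fst - ⟪z.fst, z.snd.fst⟫ + κ / 2 * ‖z.snd.fst‖ ^ 2 + L / 2 * ‖z.fst - z.snd.snd‖ ^ 2

/-- The quadratic function that agrees with `E`, up to an additive constant, on a piece with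
signs `s`. -/
def pieceE {n : ℕ} (f : Eucl n → ℝ) (lam μ L κ : ℝ)
    (s : (Fin n → SignType) × (Fin n → SignType)) (z : Trip n) : ℝ :=
  smoothE f L κ z + lam * ∑ i, (s.1 i : ℝ) * z.fst i + μ * ∑ i, (s.2 i : ℝ) * z.snd.fst i

lemma pieceE_add {n : ℕ} {f : Eucl n → ℝ} {T : Eucl n →ₗ[ℝ] Eucl n} {b : Eucl n} {c : ℝ}
    (hf : ∀ y : Eucl n, f y = ⟪y, T y⟫ / 2 + ⟪b, y⟫ + c) (lam μ L κ : ℝ)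
    (s : (Fin n → SignType) × (Fin n → SignType)) (z e : Trip n) :
    pieceE f lam μ L κ s (z + e) = pieceE f lam μ L κ s z
      + (linE b lam μ s e + hessE T L κ z e) + hessE T L κ e e / 2 := by
  simp only [pieceE, smoothE, linE, hessE, hf, LinearMap.mk₂_apply, LinearMap.coe_mk,
    AddHom.coe_mk, ← real_inner_self_eq_norm_sq, WithLp.add_fst, WithLp.add_snd, map_add,
    inner_add_left, inner_add_right, inner_sub_left, inner_sub_right, PiLp.add_apply, mul_add,
    Finset.sum_add_distrib]
  rw [real_inner_comm z.snd.fst e.snd.fst, real_inner_comm z.fst e.fst,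
    real_inner_comm z.snd.snd e.fst, real_inner_comm z.fst e.snd.snd,
    real_inner_comm z.snd.snd e.snd.snd, real_inner_comm z.snd.snd z.fst,
    real_inner_comm e.snd.snd e.fst]
  ring

lemma potE3_eq {n : ℕ} (f : Eucl n → ℝ) {P₂ : Eucl n → ℝ} {p : ℝ → ℝ} {L lam μ κ : ℝ}
    (hlam : 0 < lam) (hp : IsComp p lam μ κ) (hP : ∀ x, P₂ x = ∑ i, p (x i)) (z : Trip n)
    [Decidable (∀ i, |z.snd.fst i| ≤ lam)] :
    potE3 f (fun y : Eucl n => ((lam * ∑ i, |y i| : ℝ) : EReal)) P₂ L z =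
      if ∀ i, |z.snd.fst i| ≤ lam then
        ((smoothE f L κ z + lam * ∑ i, |z.fst i| + μ * ∑ i, |z.snd.fst i| : ℝ) : EReal)
      else ⊤ := by
  change potE f _ P₂ L z.fst z.snd.fst z.snd.snd = _
  unfold potE
  split_ifs with h
  · rw [conj_finite hp hP _ h]
    simp only [← EReal.coe_add, ← EReal.coe_sub]
    congr 1
    rw [smoothE, EuclideanSpace.norm_sq_eq z.snd.fst]
    simp only [Finset.sum_add_distrib, ← Finset.mul_sum, Real.norm_eq_abs, sq_abs]
    ring
  · rw [conj_top hp hlam hP _ h]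
    simp only [← EReal.coe_add, ← EReal.coe_sub]
    rw [EReal.coe_add_top, EReal.top_add_coe]

lemma kl_of_comp {n : ℕ} {f : Eucl n → ℝ} {T : Eucl n →ₗ[ℝ] Eucl n} {b : Eucl n} {c : ℝ}
    (hf : ∀ y : Eucl n, f y = ⟪y, T y⟫ / 2 + ⟪b, y⟫ + c)
    {P₂ : Eucl n → ℝ} {p : ℝ → ℝ} {L lam μ κ : ℝ}
    (hlam : 0 < lam) (hp : IsComp p lam μ κ) (hP : ∀ x, P₂ x = ∑ i, p (x i)) :
    IsKLWithExp
      (potE3 f (fun y : Eucl n => ((lam * ∑ i, |y i| : ℝ) : EReal)) P₂ L) (1 / 2) := by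
  classical
  have heq := potE3_eq (L := L) f hlam hp hP
  set h := potE3 f (fun y : Eucl n => ((lam * ∑ i, |y i| : ℝ) : EReal)) P₂ L with hh
  have hdom : ∀ z, h z ≠ ⊤ ↔ ∀ i, |z.snd.fst i| ≤ lam := fun z => by
    rw [heq z]; split_ifs with h1
    · exact iff_of_true (EReal.coe_ne_top _) h1
    · exact iff_of_false (fun h2 => h2 rfl) h1
  -- values at two points of the box differ by the values of a piece with matching slopes
  have hstep : ∀ (s : (Fin n → SignType) × (Fin n → SignType)) (z' z'' : Trip n),
      (∀ i, |z'.snd.fst i| ≤ lam) → (∀ i, |z''.snd.fst i| ≤ lam) →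
      (∀ i, |z''.fst i| - |z'.fst i| = (s.1 i : ℝ) * (z''.fst i - z'.fst i)) →
      (∀ i, |z''.snd.fst i| - |z'.snd.fst i|
        = (s.2 i : ℝ) * (z''.snd.fst i - z'.snd.fst i)) →
      h z'' = h z' + ((pieceE f lam μ L κ s z'' - pieceE f lam μ L κ s z' : ℝ) : EReal) := by
    intro s z' z'' h1 h2 h3 h4
    rw [heq z'', heq z', if_pos h1, if_pos h2, ← EReal.coe_add]
    congr 1
    have h5 := Finset.sum_congr (rfl : (Finset.univ : Finset (Fin n)) = _) fun i _ => h3 i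
    have h6 := Finset.sum_congr (rfl : (Finset.univ : Finset (Fin n)) = _) fun i _ => h4 i
    simp only [mul_sub, Finset.sum_sub_distrib] at h5 h6
    simp only [pieceE]
    linear_combination lam * h5 + μ * h6
  have cx : ∀ i, Continuous fun z : Trip n => z.fst i := fun i => by fun_prop
  have cy : ∀ i, Continuous fun z : Trip n => z.snd.fst i := fun i => by fun_prop
  refine kl_of_pieces h (hessE T L κ) (fun a b => ?_) pieceDir (linE b lam μ)
    (pieceE f lam μ L κ) (pieceE_add hf lam μ L κ)
    (fun z => (fun i => SignType.sign (z.fst i), fun i => boxSign lam (z.snd.fst i)))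
    (fun z => ?_) (fun z hz => ?_) (fun z₀ hz₀ => ?_)
  · simp only [hessE, LinearMap.mk₂_apply]
    rw [real_inner_comm a.snd.fst b.snd.fst,
      real_inner_comm (a.fst - a.snd.snd) (b.fst - b.snd.snd)]
    ring
  · rw [heq z]; split_ifs <;> [exact EReal.coe_ne_bot _; exact top_ne_bot]
  · have e1 : ∀ᶠ z' in 𝓝 z, ∀ i, SignType.sign (z.fst i) ≠ 0 →
        |z'.fst i| = (SignType.sign (z.fst i) : ℝ) * z'.fst i := by
      refine eventually_all.2 fun i => ?_
      by_cases h0 : SignType.sign (z.fst i) = 0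
      · exact Eventually.of_forall fun _ h => absurd h0 h
      · filter_upwards [(cx i).continuousAt.eventually (abs_eventually_linear _ h0)]
          with z' hz' _ using hz'
    have e2 : ∀ᶠ z' in 𝓝 z, ∀ i, boxSign lam (z.snd.fst i) ≠ 0 →
        |z'.snd.fst i| ≤ lam ∧
          |z'.snd.fst i| = (boxSign lam (z.snd.fst i) : ℝ) * z'.snd.fst i := by
      refine eventually_all.2 fun i => ?_
      by_cases h0 : boxSign lam (z.snd.fst i) = 0
      · exact Eventually.of_forall fun _ h => absurd h0 h
      · filter_upwards [(cy i).continuousAt.eventually (box_eventually_linear lam _ h0)]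
          with z' hz' _ using hz'
    refine ⟨_, e1.and e2, fun z' hz' z'' hz'' hW hfin => ?_⟩
    have hfin' := (hdom z').1 hfin
    have hWx : ∀ i, SignType.sign (z.fst i) = 0 → z''.fst i = z'.fst i := fun i h0 => by
      have := (hW i).1 h0
      simpa [sub_eq_zero] using this
    have hWy : ∀ i, boxSign lam (z.snd.fst i) = 0 → z''.snd.fst i = z'.snd.fst i :=
      fun i h0 => by
        have := (hW i).2 h0
        simpa [sub_eq_zero] using this
    refine hstep _ z' z'' hfin' (fun i => ?_) (fun i => ?_) (fun i => ?_)
    · by_cases h0 : boxSign lam (z.snd.fst i) = 0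
      · rw [hWy i h0]; exact hfin' i
      · exact (hz''.2 i h0).1
    · by_cases h0 : SignType.sign (z.fst i) = 0
      · rw [hWx i h0]; simp
      · rw [hz''.1 i h0, hz'.1 i h0, mul_sub]
    · by_cases h0 : boxSign lam (z.snd.fst i) = 0
      · rw [hWy i h0]; simp
      · rw [(hz''.2 i h0).2, (hz'.2 i h0).2, mul_sub]
  · have e1 : ∀ᶠ z in 𝓝 z₀, ∀ i, (SignType.sign (z.fst i) = 0 → z.fst i = z₀.fst i) ∧
        |z.fst i| - |z₀.fst i| = (SignType.sign (z.fst i) : ℝ) * (z.fst i - z₀.fst i) :=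
      eventually_all.2 fun i => (cx i).continuousAt.eventually (sign_near _)
    have e2 : ∀ᶠ z in 𝓝 z₀, ∀ i, |z.snd.fst i| ≤ lam →
        (boxSign lam (z.snd.fst i) = 0 → z.snd.fst i = z₀.snd.fst i) ∧
        |z.snd.fst i| - |z₀.snd.fst i|
          = (boxSign lam (z.snd.fst i) : ℝ) * (z.snd.fst i - z₀.snd.fst i) :=
      eventually_all.2 fun i => (cy i).continuousAt.eventually (box_near _)
    filter_upwards [e1, e2] with z h1 h2 hfin
    have hbox := (hdom z).1 hfin
    refine ⟨fun i => ⟨fun h0 => ?_, fun h0 => ?_⟩, ?_⟩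
    · have := (h1 i).1 h0
      simp [this]
    · have := (h2 i (hbox i)).1 h0
      simp [this]
    · exact hstep _ z₀ z ((hdom z₀).1 hz₀) hbox (fun i => (h1 i).2)
        (fun i => (h2 i (hbox i)).2)

/-- Corollary 4.1: for a convex quadratic `f` and the MCP or SCAD regularizer `P₁ - P₂`, the
potential function `E` is a KL function with exponent `1/2`. -/
theorem KL_half_potE_MCP_SCAD
    {n : ℕ} (f : Eucl n → ℝ) (f' : Eucl n → Eucl n) (P₂ : Eucl n → ℝ)
    (L lam θ : ℝ)
    (hL : 0 < L)
    (hquad : ∃ (T : Eucl n →ₗ[ℝ] Eucl n) (b : Eucl n) (c : ℝ),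
      ∀ y : Eucl n, f y = ⟪y, T y⟫ / 2 + ⟪b, y⟫ + c)
    (hfconv : ConvexOn ℝ Set.univ f)
    (hfgrad : ∀ y, HasGradientAt f (f' y) y)
    (hflip : ∀ y z, ‖f' y - f' z‖ ≤ L * ‖y - z‖)
    (hlam : 0 < lam)
    (hP₂ :
      (1 < θ ∧ ∀ y : Eucl n,
        P₂ y = lam * ∑ i, ∫ t in (0:ℝ)..|y i|, min 1 (t / (θ * lam))) ∨
      (2 < θ ∧ ∀ y : Eucl n,
        P₂ y = lam * ∑ i, ∫ t in (0:ℝ)..|y i|, max (min (θ * lam) t - lam) 0 / ((θ - 1) * lam))) :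
    IsKLWithExp
      (potE3 f (fun y : Eucl n => ((lam * ∑ i, |y i| : ℝ) : EReal)) P₂ L) (1 / 2) := by
  obtain ⟨T, b, c, hf⟩ := hquad
  rcases hP₂ with ⟨hθ, hP⟩ | ⟨hθ, hP⟩
  · exact kl_of_comp hf hlam (isComp_MCP hlam hθ) fun x => by rw [hP, Finset.mul_sum]
  · exact kl_of_comp hf hlam (isComp_SCAD hlam hθ) fun x => by rw [hP, Finset.mul_sum]
end
end
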